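/- arXiv:2507.10728 — 2 statements merged into one kernel-verified Lean document; each statement's English description precedes it below -/
import Mathlib

section
/- Let u be a weak solution of −div(A∇u) = u in Ω. For every δ ∈ (0,1) there exists R₁ = R₁(u, n, α, δ) > 1 such that the function ρ ↦ G(ρ)/ρ^{n−1−δ} is non-decreasing on the interval [R₁, ∞). -/
open MeasureTheory Metric Filter

noncomputable section

abbrev En (n : ℕ) := EuclideanSpace ℝ (Fin n)

/-- The exterior domain `Ω = {x ∈ ℝⁿ : |x| > 1}`. -/
def OmegaExt (n : ℕ) : Set (En n) := {x | 1 < ‖x‖}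

/-- The quadratic/bilinear form `⟨M ξ, η⟩`. -/
def quadForm {n : ℕ} (M : Matrix (Fin n) (Fin n) ℝ) (ξ η : En n) : ℝ :=
  ∑ i, M.mulVec (fun j => ξ j) i * η i

/-- The conformal factor `μ(x) = ⟨A(x)∇r, ∇r⟩ = ⟨A(x)x, x⟩ / |x|²`. -/
def muA {n : ℕ} (A : En n → Matrix (Fin n) (Fin n) ℝ) (x : En n) : ℝ :=
  quadForm (A x) x x / ‖x‖ ^ 2

/-- The vector field `Z(x) = r(x) A(x)∇r(x) / μ(x) = A(x)x / μ(x)`. -/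
def Zvec {n : ℕ} (A : En n → Matrix (Fin n) (Fin n) ℝ) (x : En n) : En n :=
  (muA A x)⁻¹ • (WithLp.toLp 2 ((A x).mulVec (fun j => x j)) : En n)

/-- The derivative of `f` along `Z`: `Zf = ⟨Z, ∇f⟩`. -/
def Zd {n : ℕ} (A : En n → Matrix (Fin n) (Fin n) ℝ) (f : En n → ℝ) (x : En n) : ℝ :=
  ∑ i, Zvec A x i * gradient f x i

/-- Surface integral over the sphere `{|x| = ρ}` w.r.t. the `(n-1)`-dimensional
Hausdorff measure. -/
def sphInt (n : ℕ) (ρ : ℝ) (f : En n → ℝ) : ℝ :=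
  ∫ x in sphere (0 : En n) ρ, f x ∂(μH[(n : ℝ) - 1])

/-- Structural hypotheses on `A`: symmetry, `C¹` entries on `Ω`, uniform ellipticity
`λ|ξ|² ≤ ⟨A(x)ξ,ξ⟩ ≤ λ⁻¹|ξ|²`, and the decay `|x||∇B(x)| + |B(x)| ≤ C|x|^{-α}`
where `B = A - Iₙ` (entrywise). -/
def EllipticDecay {n : ℕ} (A : En n → Matrix (Fin n) (Fin n) ℝ) (lam α C : ℝ) : Prop :=
  (∀ x ∈ OmegaExt n, (A x).IsSymm) ∧
  (∀ i j, ContDiffOn ℝ 1 (fun x => A x i j) (OmegaExt n)) ∧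
  (∀ x ∈ OmegaExt n, ∀ ξ : En n,
      lam * ‖ξ‖ ^ 2 ≤ quadForm (A x) ξ ξ ∧ quadForm (A x) ξ ξ ≤ lam⁻¹ * ‖ξ‖ ^ 2) ∧
  (∀ x ∈ OmegaExt n, ∀ i j,
      ‖x‖ * ‖gradient (fun y => (A y - 1) i j) x‖ + |(A x - 1) i j| ≤ C * ‖x‖ ^ (-α))

/-- `u ∈ C¹(Ω)` is a weak solution of `-div(A∇u) = u` in `Ω`, i.e.
`∫_Ω ⟨A∇u, ∇φ⟩ = ∫_Ω u φ` for every test function `φ ∈ C_c^∞(Ω)`. -/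
def WeakSol {n : ℕ} (A : En n → Matrix (Fin n) (Fin n) ℝ) (u : En n → ℝ) : Prop :=
  ContDiffOn ℝ 1 u (OmegaExt n) ∧
  ∀ φ : En n → ℝ, ContDiff ℝ (⊤ : ℕ∞) φ → HasCompactSupport φ → tsupport φ ⊆ OmegaExt n →
    (∫ x in OmegaExt n, ∑ i, (A x).mulVec (fun j => gradient u x j) i * gradient φ x i) =
    ∫ x in OmegaExt n, u x * φ x

/-- The functional `G(ρ)` associated with a solution `u`, where `w = r^{(n-1)/2} u`. -/
def Gfun {n : ℕ} (A : En n → Matrix (Fin n) (Fin n) ℝ) (u : En n → ℝ) (ρ : ℝ) : ℝ :=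
  let w : En n → ℝ := fun x => ‖x‖ ^ (((n : ℝ) - 1) / 2) * u x
  2 * sphInt n ρ (fun x => (Zd A w x / ‖x‖) ^ 2 * muA A x)
    - sphInt n ρ (fun x => quadForm (A x) (gradient w x) (gradient w x))
    + sphInt n ρ (fun x => (w x) ^ 2)
    - ((n : ℝ) - 1) * ((n : ℝ) - 3) / 4 * sphInt n ρ (fun x => (w x) ^ 2 / ‖x‖ ^ 2 * muA A x)

section Part1
open MeasureTheory Metric Filter
noncomputable section

/-- The surface measure on the unit sphere. -/
def sig (n : ℕ) : Measure (En n) := (μH[(n : ℝ) - 1]).restrict (sphere 0 1)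

lemma sphere_fin_aux (m : ℕ) : μH[(m : ℝ)] (sphere (0 : En (m+1)) 1) < ⊤ := by
  let φ : Fin (m+1) → ℝ → (Fin m → ℝ) → En (m+1) := fun i s y =>
    (‖(WithLp.toLp 2 (i.insertNth (α := fun _ => ℝ) s y) : En (m+1))‖⁻¹) • (WithLp.toLp 2 (i.insertNth (α := fun _ => ℝ) s y) : En (m+1))
  have hcd : ∀ i s, s ≠ 0 → ContDiff ℝ 1 (φ i s) := by
    intro i s hs
    have h1 : ContDiff ℝ 1 (fun y : Fin m → ℝ => (WithLp.toLp 2 (i.insertNth (α := fun _ => ℝ) s y) : En (m+1))) := by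
      rw [contDiff_euclidean]
      intro k
      refine Fin.succAboveCases i ?_ ?_ k
      · simpa using contDiff_const
      · intro j; simpa using contDiff_apply ℝ ℝ j
    have hne : ∀ y : Fin m → ℝ, (WithLp.toLp 2 (i.insertNth (α := fun _ => ℝ) s y) : En (m+1)) ≠ 0 := by
      intro y h
      have := congrArg (fun v : En (m+1) => v i) h
      simp at this
      exact hs this
    exact ((h1.norm ℝ hne).inv (fun y => by simpa using hne y)).smul h1
  have hfin : ∀ i s, s ≠ 0 → μH[(m : ℝ)] (φ i s '' closedBall 0 1) < ⊤ := by
    intro i s hs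
    have hll := (hcd i s hs).locallyLipschitz
    obtain ⟨K, hK⟩ := (hll.locallyLipschitzOn (s := closedBall 0 1)).exists_lipschitzOnWith_of_compact
      (isCompact_closedBall 0 1)
    refine (hK.hausdorffMeasure_image_le (Nat.cast_nonneg m)).trans_lt ?_
    have : (μH[(m : ℝ)] : Measure (Fin m → ℝ)) = volume := by
      simpa using hausdorffMeasure_pi_real (ι := Fin m)
    rw [this]
    refine ENNReal.mul_lt_top ?_ (isCompact_closedBall 0 1).measure_lt_top
    exact ENNReal.rpow_lt_top_of_nonneg (Nat.cast_nonneg m) ENNReal.coe_ne_top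
  have hsub : sphere (0 : En (m+1)) 1 ⊆
      ⋃ i, (φ i 1 '' closedBall 0 1 ∪ φ i (-1) '' closedBall 0 1) := by
    intro ω hω
    have hω1 : ‖ω‖ = 1 := by simpa using hω
    obtain ⟨i, hi⟩ := Finite.exists_max (fun i => |ω i|)
    have hpos : 0 < |ω i| := by
      by_contra hcon
      have : ω = 0 := by
        ext k
        have := hi k
        have h2 := abs_nonneg (ω k)
        have h3 : |ω k| = 0 := by linarith
        simpa using h3
      rw [this] at hω1; simp at hω1
    have hin : ∀ s, ω i = s * |ω i| → s ≠ 0 →  ω ∈ φ i s '' closedBall 0 1 := by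
      intro s hs hs0
      refine ⟨fun j => ω (i.succAbove j) / |ω i|, ?_, ?_⟩
      · rw [mem_closedBall_zero_iff, pi_norm_le_iff_of_nonneg zero_le_one]
        intro j
        rw [Real.norm_eq_abs, abs_div, abs_abs]
        exact div_le_one_of_le₀ (hi _) (abs_nonneg _)
      · have : (WithLp.toLp 2 (i.insertNth (α := fun _ => ℝ) s (fun j => ω (i.succAbove j) / |ω i|)) : En (m+1)) = |ω i|⁻¹ • ω := by
          ext k
          refine Fin.succAboveCases i ?_ ?_ k
          · simp; rw [eq_inv_mul_iff_mul_eq₀ hpos.ne']; linarith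
          · intro j; simp; ring
        simp only [φ]
        rw [this, norm_smul, hω1, smul_smul]
        simp [hpos.ne']
    refine Set.mem_iUnion.2 ⟨i, ?_⟩
    rcases le_total 0 (ω i) with h | h
    · left; exact hin 1 (by rw [abs_of_nonneg h]; ring) one_ne_zero
    · right; exact hin (-1) (by rw [abs_of_nonpos h]; ring) (by norm_num)
  refine (measure_mono hsub).trans_lt ?_
  refine (measure_iUnion_fintype_le _ _).trans_lt ?_
  rw [ENNReal.sum_lt_top]
  intro i _
  exact (measure_union_le _ _).trans_lt (ENNReal.add_lt_top.2 ⟨hfin i 1 one_ne_zero, hfin i (-1) (by norm_num)⟩)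

lemma sig_finite (n : ℕ) (hn : 2 ≤ n) : IsFiniteMeasure (sig n) := by
  obtain ⟨m, rfl⟩ : ∃ m, n = m + 1 := ⟨n - 1, by omega⟩
  refine ⟨?_⟩
  rw [sig, Measure.restrict_apply_univ]
  have := sphere_fin_aux m
  simpa using this

lemma sig_ae (n : ℕ) : ∀ᵐ x ∂(sig n), x ∈ sphere (0 : En n) 1 :=
  ae_restrict_mem isClosed_sphere.measurableSet

lemma sig_rot (n : ℕ) (R : En n ≃ₗᵢ[ℝ] En n) (f : En n → ℝ) :
    ∫ x, f (R x) ∂(sig n) = ∫ x, f x ∂(sig n) := by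
  have h := (R.toIsometryEquiv.measurePreserving_hausdorffMeasure ((n : ℝ) - 1)).setIntegral_preimage_emb
    R.toIsometryEquiv.toHomeomorph.measurableEmbedding f (sphere 0 1)
  have hs : R.toIsometryEquiv ⁻¹' sphere (0 : En n) 1 = sphere 0 1 := by
    ext x; simp
  rw [hs] at h
  exact h

open scoped Pointwise in
lemma sphInt_eq (n : ℕ) (hn : 2 ≤ n) (ρ : ℝ) (hρ : 0 < ρ) (f : En n → ℝ) :
    sphInt n ρ f = ρ ^ (n - 1) * ∫ x, f (ρ • x) ∂(sig n) := by
  have hd : (0 : ℝ) ≤ (n : ℝ) - 1 := by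
    have : (2 : ℝ) ≤ n := by exact_mod_cast hn
    linarith
  let e : En n ≃ₜ En n := Homeomorph.smulOfNeZero ρ hρ.ne'
  have hmap : Measure.map e (μH[(n : ℝ) - 1] : Measure (En n)) = ENNReal.ofReal (ρ ^ (n-1))⁻¹ • μH[(n : ℝ) - 1] := by
    ext s hs
    rw [e.measurableEmbedding.map_apply, Measure.smul_apply]
    have : e ⁻¹' s = ρ⁻¹ • s := by
      rw [Set.preimage_eq_iff_eq_image e.bijective |>.2]
      ext x; simp only [Set.mem_image, Set.mem_smul_set, e]
      constructor
      · intro hx; exact ⟨ρ⁻¹ • x, ⟨x, hx, rfl⟩, by simp [hρ.ne']⟩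
      · rintro ⟨y, ⟨z, hz, rfl⟩, rfl⟩; simpa [hρ.ne'] using hz
    rw [this, Measure.hausdorffMeasure_smul₀ hd (inv_ne_zero hρ.ne')]
    rw [ENNReal.smul_def, smul_eq_mul, smul_eq_mul]
    congr 1
    rw [ENNReal.ofReal, ENNReal.coe_inj]
    apply NNReal.eq
    rw [Real.coe_toNNReal _ (by positivity)]
    simp only [NNReal.coe_rpow, coe_nnnorm, Real.norm_eq_abs, abs_inv, abs_of_pos hρ]
    rw [Real.inv_rpow hρ.le, ← Real.rpow_natCast, Nat.cast_sub (by omega)]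
    simp
  have h := e.measurableEmbedding.setIntegral_map (μ := (μH[(n : ℝ) - 1] : Measure (En n))) f (sphere 0 ρ)
  have hs : e ⁻¹' sphere (0 : En n) ρ = sphere 0 1 := by
    ext x; simp [e, norm_smul, abs_of_pos hρ, hρ.ne']
  rw [hs, hmap, Measure.restrict_smul, integral_smul_measure, ENNReal.toReal_ofReal (by positivity)] at h
  unfold sphInt sig
  have : (∫ x in sphere (0 : En n) 1, f (ρ • x) ∂(μH[(n : ℝ) - 1])) = (ρ ^ (n-1))⁻¹ • ∫ y in sphere (0 : En n) ρ, f y ∂(μH[(n : ℝ) - 1]) := h.symm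
  rw [this, smul_eq_mul, ← mul_assoc, mul_inv_cancel₀ (by positivity), one_mul]
end
end Part1

section Part2
open MeasureTheory Metric Filter
noncomputable section

/-- Partial derivative. -/
def pd {n : ℕ} (i : Fin n) (f : En n → ℝ) (x : En n) : ℝ := fderiv ℝ f x (EuclideanSpace.single i 1)

lemma fderiv_eq_sum_pd {n : ℕ} (f : En n → ℝ) (x v : En n) :
    fderiv ℝ f x v = ∑ k, v k * pd k f x := by
  have : v = ∑ k, v k • EuclideanSpace.single k (1 : ℝ) := by
    ext j
    simp [Finset.sum_apply, Pi.single_apply]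
  conv_lhs => rw [this]
  simp [pd, map_sum]

lemma sig_integrable {n : ℕ} (hn : 2 ≤ n) {f : En n → ℝ} (hf : ContinuousOn f (sphere 0 1)) :
    Integrable f (sig n) := by
  have := sig_finite n hn
  obtain ⟨M, hM⟩ := (isCompact_sphere (0 : En n) 1).exists_bound_of_continuousOn hf
  refine Integrable.of_bound (hf.aestronglyMeasurable isClosed_sphere.measurableSet) M ?_
  filter_upwards [sig_ae n] with x hx using hM x hx

lemma sig_hasDeriv {n : ℕ} (hn : 2 ≤ n) (F F' : ℝ → En n → ℝ) (t₀ ε : ℝ) (hε : 0 < ε)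
    (hF : ∀ t ∈ Set.Icc (t₀ - ε) (t₀ + ε), ContinuousOn (F t) (sphere 0 1))
    (hF' : ContinuousOn (fun p : ℝ × En n => F' p.1 p.2) (Set.Icc (t₀ - ε) (t₀ + ε) ×ˢ sphere 0 1))
    (hd : ∀ t ∈ Set.Icc (t₀ - ε) (t₀ + ε), ∀ ω ∈ sphere (0 : En n) 1, HasDerivAt (fun s => F s ω) (F' t ω) t) :
    HasDerivAt (fun t => ∫ ω, F t ω ∂(sig n)) (∫ ω, F' t₀ ω ∂(sig n)) t₀ := by
  have := sig_finite n hn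
  obtain ⟨M, hM⟩ := (isCompact_Icc.prod (isCompact_sphere (0 : En n) 1)).exists_bound_of_continuousOn hF'
  have h0 : t₀ ∈ Set.Icc (t₀ - ε) (t₀ + ε) := ⟨by linarith, by linarith⟩
  have hnh : Set.Icc (t₀ - ε) (t₀ + ε) ∈ nhds t₀ := Icc_mem_nhds (by linarith) (by linarith)
  refine (hasDerivAt_integral_of_dominated_loc_of_deriv_le (bound := fun _ => M) hnh ?_ (sig_integrable hn (hF _ h0)) ?_ ?_ (integrable_const _) ?_).2
  · filter_upwards [hnh] with t ht
    exact (sig_integrable hn (hF t ht)).aestronglyMeasurable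
  · refine (sig_integrable hn ?_).aestronglyMeasurable
    exact hF'.comp (f := fun ω => (t₀, ω)) (by fun_prop) (fun ω hω => ⟨h0, hω⟩)
  · filter_upwards [sig_ae n] with ω hω t ht using hM (t, ω) ⟨ht, hω⟩
  · filter_upwards [sig_ae n] with ω hω t ht using hd t ht ω hω

/-- Rotation vector. -/
def rotV {n : ℕ} (i j : Fin n) (t : ℝ) (x : En n) : En n :=
  x + ((Real.cos t - 1) * x i - Real.sin t * x j) • EuclideanSpace.single i 1
    + (Real.sin t * x i + (Real.cos t - 1) * x j) • EuclideanSpace.single j 1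

lemma rotV_norm {n : ℕ} (i j : Fin n) (hij : i ≠ j) (t : ℝ) (x : En n) : ‖rotV i j t x‖ = ‖x‖ := by
  have h : ‖rotV i j t x‖ ^ 2 = ‖x‖ ^ 2 := by
    unfold rotV
    simp only [← real_inner_self_eq_norm_sq, inner_add_left, inner_add_right, inner_smul_left,
      inner_smul_right, EuclideanSpace.inner_single_left, EuclideanSpace.inner_single_right]
    simp [hij, hij.symm]
    have := Real.sin_sq_add_cos_sq t
    linear_combination (x i ^ 2 + x j ^ 2) * this
  exact (sq_eq_sq₀ (norm_nonneg _) (norm_nonneg _)).1 h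

/-- Rotation in the `(i,j)` plane. -/
def rotE {n : ℕ} (i j : Fin n) (hij : i ≠ j) (t : ℝ) : En n ≃ₗᵢ[ℝ] En n :=
  LinearIsometry.toLinearIsometryEquiv
    { toFun := rotV i j t
      map_add' := by
        intro x y; ext k; simp [rotV, Pi.single_apply]; split_ifs <;> ring
      map_smul' := by
        intro c x; ext k; simp [rotV, Pi.single_apply]; split_ifs <;> ring
      norm_map' := rotV_norm i j hij t } rfl

lemma rotE_apply {n : ℕ} (i j : Fin n) (hij : i ≠ j) (t : ℝ) (x : En n) :
    rotE i j hij t x = rotV i j t x := rfl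

lemma sig_rot_zero {n : ℕ} (hn : 2 ≤ n) (F : En n → ℝ) (U : Set (En n)) (hU : IsOpen U)
    (hsU : sphere 0 1 ⊆ U) (hF : ContDiffOn ℝ 1 F U) (i j : Fin n) :
    ∫ ω, (ω i * pd j F ω - ω j * pd i F ω) ∂(sig n) = 0 := by
  by_cases hij : i = j
  · subst hij; simp
  have hdU : ∀ x ∈ U, DifferentiableAt ℝ F x := fun x hx =>
    ((hF.differentiableOn (by norm_num)) x hx).differentiableAt (hU.mem_nhds hx)
  let dR : ℝ → En n → En n := fun t x =>
    (-Real.sin t * x i - Real.cos t * x j) • EuclideanSpace.single i 1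
    + (Real.cos t * x i - Real.sin t * x j) • EuclideanSpace.single j 1
  have hmem : ∀ t, ∀ ω ∈ sphere (0 : En n) 1, rotV i j t ω ∈ sphere (0 : En n) 1 := by
    intro t ω hω
    simp only [mem_sphere_zero_iff_norm] at hω ⊢
    rw [rotV_norm i j hij, hω]
  have hcR : Continuous (fun p : ℝ × En n => rotV i j p.1 p.2) := by unfold rotV; fun_prop
  have hcdR : Continuous (fun p : ℝ × En n => dR p.1 p.2) := by simp only [dR]; fun_prop
  have key := sig_hasDeriv hn (fun t ω => F (rotV i j t ω)) (fun t ω => fderiv ℝ F (rotV i j t ω) (dR t ω)) 0 1 one_pos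
    (by
      intro t _
      exact hF.continuousOn.comp (hcR.comp (by fun_prop : Continuous fun ω : En n => (t, ω))).continuousOn
        (fun ω hω => hsU (hmem t ω hω)))
    (by
      refine ContinuousOn.clm_apply ?_ hcdR.continuousOn
      exact (hF.continuousOn_fderiv_of_isOpen hU le_rfl).comp hcR.continuousOn (fun p hp => hsU (hmem p.1 p.2 hp.2)))
    (by
      intro t _ ω hω
      have h1 : HasDerivAt (fun s => rotV i j s ω) (dR t ω) t := by
        unfold rotV
        simp only [dR]
        have hc := Real.hasDerivAt_cos t
        have hs := Real.hasDerivAt_sin t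
        have e1 := ((((hc.sub_const 1).mul_const (ω i)).sub (hs.mul_const (ω j))).smul_const (EuclideanSpace.single i (1:ℝ) : En n)).const_add ω
        have e2 := (((hs.mul_const (ω i)).add ((hc.sub_const 1).mul_const (ω j)))).smul_const (EuclideanSpace.single j (1:ℝ) : En n)
        have e3 := e1.add e2
        refine e3.congr_deriv ?_
        module
      exact (hdU _ (hsU (hmem t ω hω))).hasFDerivAt.comp_hasDerivAt t h1)
  have hconst : (fun t => ∫ ω, F (rotV i j t ω) ∂(sig n)) = fun _ => ∫ ω, F ω ∂(sig n) := by
    funext t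
    exact sig_rot n (rotE i j hij t) F
  rw [hconst] at key
  have h0 := key.unique (hasDerivAt_const (0:ℝ) _)
  rw [← h0]
  congr 1
  funext ω
  have : rotV i j 0 ω = ω := by simp [rotV]
  rw [this]
  simp only [dR, map_add, map_smul, smul_eq_mul, pd]
  simp
  ring

lemma isOpen_Omega (n : ℕ) : IsOpen (OmegaExt n) := isOpen_lt continuous_const continuous_norm

lemma pd_mul {n : ℕ} {f g : En n → ℝ} {x : En n} (i : Fin n) (hf : DifferentiableAt ℝ f x) (hg : DifferentiableAt ℝ g x) :
    pd i (fun y => f y * g y) x = pd i f x * g x + f x * pd i g x := by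
  unfold pd; rw [fderiv_fun_mul hf hg]; simp; ring

lemma pd_add {n : ℕ} {f g : En n → ℝ} {x : En n} (i : Fin n) (hf : DifferentiableAt ℝ f x) (hg : DifferentiableAt ℝ g x) :
    pd i (fun y => f y + g y) x = pd i f x + pd i g x := by
  unfold pd; rw [fderiv_fun_add hf hg]; simp

lemma pd_sub {n : ℕ} {f g : En n → ℝ} {x : En n} (i : Fin n) (hf : DifferentiableAt ℝ f x) (hg : DifferentiableAt ℝ g x) :
    pd i (fun y => f y - g y) x = pd i f x - pd i g x := by
  unfold pd; rw [fderiv_fun_sub hf hg]; simp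

lemma pd_sum {n : ℕ} {ι : Type*} {s : Finset ι} {f : ι → En n → ℝ} {x : En n} (i : Fin n) (hf : ∀ k ∈ s, DifferentiableAt ℝ (f k) x) :
    pd i (fun y => ∑ k ∈ s, f k y) x = ∑ k ∈ s, pd i (f k) x := by
  unfold pd; rw [fderiv_fun_sum hf]; simp

lemma pd_const_mul {n : ℕ} {f : En n → ℝ} {x : En n} (i : Fin n) (c : ℝ) (hf : DifferentiableAt ℝ f x) :
    pd i (fun y => c * f y) x = c * pd i f x := by
  unfold pd; rw [fderiv_const_mul hf]; simp

lemma diffAt_coord {n : ℕ} (k : Fin n) (x : En n) : DifferentiableAt ℝ (fun y : En n => y k) x := by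
  fun_prop

lemma pd_coord {n : ℕ} (i k : Fin n) (x : En n) : pd i (fun y : En n => y k) x = if i = k then 1 else 0 := by
  unfold pd
  have : (fun y : En n => y k) = (EuclideanSpace.proj k : En n →L[ℝ] ℝ) := rfl
  rw [this, ContinuousLinearMap.fderiv]
  simp [Pi.single_apply, eq_comm]

lemma pd_comp_smul {n : ℕ} (i : Fin n) (f : En n → ℝ) (ρ : ℝ) (x : En n) (hf : DifferentiableAt ℝ f (ρ • x)) :
    pd i (fun y => f (ρ • y)) x = ρ * pd i f (ρ • x) := by
  unfold pd
  have h1 : HasFDerivAt (fun y : En n => ρ • y) (ρ • ContinuousLinearMap.id ℝ (En n)) x := (hasFDerivAt_id x).const_smul ρ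
  have := (hf.hasFDerivAt.comp x h1).fderiv
  rw [show (fun y => f (ρ • y)) = f ∘ (fun y => ρ • y) from rfl, this]
  simp

lemma pd_continuousOn {n : ℕ} (i : Fin n) {f : En n → ℝ} {U : Set (En n)} (hU : IsOpen U) (hf : ContDiffOn ℝ 1 f U) :
    ContinuousOn (pd i f) U :=
  (hf.continuousOn_fderiv_of_isOpen hU le_rfl).clm_apply continuousOn_const

lemma sphere_div {n : ℕ} (hn : 2 ≤ n) (V : Fin n → En n → ℝ) (hV : ∀ j, ContDiffOn ℝ 1 (V j) (OmegaExt n))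
    (ρ : ℝ) (hρ : 1 < ρ) :
    HasDerivAt (fun s => s ^ (n-1) * ∫ ω, ∑ j, ω j * V j (s • ω) ∂(sig n))
      (ρ ^ (n-1) * ∫ ω, ∑ j, pd j (V j) (ρ • ω) ∂(sig n)) ρ := by
  have hO := isOpen_Omega n
  have hdV : ∀ j, ∀ x ∈ OmegaExt n, DifferentiableAt ℝ (V j) x := fun j x hx =>
    (((hV j).differentiableOn (by norm_num)) x hx).differentiableAt (hO.mem_nhds hx)
  have hmem : ∀ s : ℝ, 1 < s → ∀ ω ∈ sphere (0 : En n) 1, s • ω ∈ OmegaExt n := by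
    intro s hs ω hω
    have : ‖ω‖ = 1 := by simpa using hω
    simp only [OmegaExt, Set.mem_ofPred_eq, norm_smul, this, Real.norm_eq_abs, mul_one]
    exact lt_of_lt_of_le hs (le_abs_self s)
  have hIcc : ∀ t ∈ Set.Icc (ρ - (ρ - 1)/2) (ρ + (ρ-1)/2), 1 < t := fun t ht => by
    have := ht.1; linarith
  have hsm : ContinuousOn (fun p : ℝ × En n => p.1 • p.2) (Set.Icc (ρ - (ρ - 1)/2) (ρ + (ρ-1)/2) ×ˢ sphere (0 : En n) 1) := by fun_prop
  have hcV : ∀ j, ∀ s : ℝ, 1 < s → ContinuousOn (fun ω => V j (s • ω)) (sphere 0 1) := fun j s hs =>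
    (hV j).continuousOn.comp (by fun_prop) (fun ω hω => hmem s hs ω hω)
  have hcD : ∀ i j, ∀ s : ℝ, 1 < s → ContinuousOn (fun ω => pd i (V j) (s • ω)) (sphere 0 1) := fun i j s hs =>
    (pd_continuousOn i hO (hV j)).comp (by fun_prop) (fun ω hω => hmem s hs ω hω)
  have hcc : ∀ j, ContinuousOn (fun ω : En n => ω j) (sphere 0 1) := fun j => by fun_prop
  have key := sig_hasDeriv hn (fun s ω => ∑ j, ω j * V j (s • ω)) (fun s ω => ∑ j, ω j * ∑ k, ω k * pd k (V j) (s • ω)) ρ ((ρ-1)/2) (by linarith)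
    (by
      intro s hs
      exact continuousOn_finsetSum _ fun j _ => (hcc j).mul (hcV j s (hIcc s hs)))
    (by
      refine continuousOn_finsetSum _ fun j _ => ContinuousOn.mul (by fun_prop) (continuousOn_finsetSum _ fun k _ => ContinuousOn.mul (by fun_prop) ?_)
      exact (pd_continuousOn k hO (hV j)).comp hsm (fun p hp => hmem p.1 (hIcc p.1 hp.1) p.2 hp.2))
    (by
      intro s hs ω hω
      refine HasDerivAt.fun_sum fun j _ => HasDerivAt.const_mul _ ?_
      rw [← fderiv_eq_sum_pd]
      have h1 : HasDerivAt (fun t : ℝ => t • ω) ω s := by simpa using (hasDerivAt_id s).smul_const ω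
      exact (hdV j _ (hmem s (hIcc s hs) ω hω)).hasFDerivAt.comp_hasDerivAt s h1)
  have hrot : ∀ i j, ∫ ω, (ω i * ((if j = i then 1 else 0) * V j (ρ • ω) + ω i * (ρ * pd j (V j) (ρ • ω)))
      - ω j * (V j (ρ • ω) + ω i * (ρ * pd i (V j) (ρ • ω)))) ∂(sig n) = 0 := by
    intro i j
    have hU : IsOpen ((fun y : En n => ρ • y) ⁻¹' OmegaExt n) := hO.preimage (by fun_prop)
    have h := sig_rot_zero hn (fun y => y i * V j (ρ • y)) ((fun y : En n => ρ • y) ⁻¹' OmegaExt n) hU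
      (fun ω hω => hmem ρ hρ ω hω)
      (ContDiffOn.mul (by fun_prop) ((hV j).comp (by fun_prop) (fun x hx => hx))) i j
    refine Eq.trans (integral_congr_ae ?_) h
    filter_upwards [sig_ae n] with ω hω
    have hd := hdV j _ (hmem ρ hρ ω hω)
    have hd' : DifferentiableAt ℝ (fun y => V j (ρ • y)) ω := by
      refine DifferentiableAt.comp ω (g := V j) (f := fun y => ρ • y) hd (by fun_prop)
    rw [pd_mul _ (diffAt_coord i ω) hd', pd_mul _ (diffAt_coord i ω) hd', pd_coord, pd_coord, pd_comp_smul _ _ _ _ hd, pd_comp_smul _ _ _ _ hd]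
    simp
  have hintg : ∀ i j, Integrable (fun ω => (ω i * ((if j = i then 1 else 0) * V j (ρ • ω) + ω i * (ρ * pd j (V j) (ρ • ω)))
      - ω j * (V j (ρ • ω) + ω i * (ρ * pd i (V j) (ρ • ω))))) (sig n) := by
    intro i j
    refine sig_integrable hn ?_
    exact ((hcc i).mul ((continuousOn_const.mul (hcV j ρ hρ)).add ((hcc i).mul (continuousOn_const.mul (hcD j j ρ hρ))))).sub
      ((hcc j).mul ((hcV j ρ hρ).add ((hcc i).mul (continuousOn_const.mul (hcD i j ρ hρ)))))
  have hsum : ∫ ω, ∑ i, ∑ j, (ω i * ((if j = i then 1 else 0) * V j (ρ • ω) + ω i * (ρ * pd j (V j) (ρ • ω)))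
      - ω j * (V j (ρ • ω) + ω i * (ρ * pd i (V j) (ρ • ω)))) ∂(sig n) = 0 := by
    rw [integral_finsetSum _ (fun i _ => integrable_finsetSum _ fun j _ => hintg i j)]
    refine Finset.sum_eq_zero fun i _ => ?_
    rw [integral_finsetSum _ (fun j _ => hintg i j)]
    exact Finset.sum_eq_zero fun j _ => hrot i j
  have hi1 : Integrable (fun ω => ∑ j, ω j * V j (ρ • ω)) (sig n) :=
    sig_integrable hn (continuousOn_finsetSum _ fun j _ => (hcc j).mul (hcV j ρ hρ))
  have hi2 : Integrable (fun ω => ∑ j, pd j (V j) (ρ • ω)) (sig n) :=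
    sig_integrable hn (continuousOn_finsetSum _ fun j _ => (hcD j j ρ hρ))
  have hi3 : Integrable (fun ω => ∑ j, ω j * ∑ k, ω k * pd k (V j) (ρ • ω)) (sig n) :=
    sig_integrable hn (continuousOn_finsetSum _ fun j _ => (hcc j).mul (continuousOn_finsetSum _ fun k _ => (hcc k).mul (hcD k j ρ hρ)))
  have hid : ρ * ∫ ω, ∑ j, pd j (V j) (ρ • ω) ∂(sig n) =
      ((n : ℝ) - 1) * (∫ ω, ∑ j, ω j * V j (ρ • ω) ∂(sig n)) + ρ * ∫ ω, ∑ j, ω j * ∑ k, ω k * pd k (V j) (ρ • ω) ∂(sig n) := by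
    have : ∫ ω, (ρ * ∑ j, pd j (V j) (ρ • ω) - ((n : ℝ) - 1) * (∑ j, ω j * V j (ρ • ω)) - ρ * ∑ j, ω j * ∑ k, ω k * pd k (V j) (ρ • ω)) ∂(sig n) = 0 := by
      rw [← hsum]
      refine integral_congr_ae ?_
      filter_upwards [sig_ae n] with ω hω
      have h1 : ∑ i, ω i * ω i = 1 := by
        have h : ‖ω‖ = 1 := by simpa using hω
        have := EuclideanSpace.norm_sq_eq ω
        rw [h] at this
        simp only [Real.norm_eq_abs, sq_abs] at this
        rw [show (1:ℝ) = 1^2 by norm_num, this]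
        exact Finset.sum_congr rfl fun i _ => by ring
      have e : ∀ i j, (ω i * ((if j = i then 1 else 0) * V j (ρ • ω) + ω i * (ρ * pd j (V j) (ρ • ω)))
          - ω j * (V j (ρ • ω) + ω i * (ρ * pd i (V j) (ρ • ω)))) =
          (if j = i then ω i * V j (ρ • ω) else 0) + (ω i * ω i) * (ρ * pd j (V j) (ρ • ω)) - ω j * V j (ρ • ω)
            - ρ * (ω j * (ω i * pd i (V j) (ρ • ω))) := by
        intro i j; split_ifs <;> ring
      simp only [e, Finset.sum_sub_distrib, Finset.sum_add_distrib, Finset.sum_ite_eq', Finset.sum_ite_eq, Finset.mem_univ, if_true]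
      simp only [← Finset.mul_sum, ← Finset.sum_mul, h1]
      rw [Finset.sum_comm (f := fun i j => ω j * (ω i * pd i (V j) (ρ • ω)))]
      simp only [← Finset.mul_sum, Finset.sum_const, Finset.card_univ, Fintype.card_fin, nsmul_eq_mul]
      ring
    have hi4 : Integrable (fun ω => ρ * ∑ j, pd j (V j) (ρ • ω) - ((n : ℝ) - 1) * (∑ j, ω j * V j (ρ • ω))) (sig n) :=
      (hi2.const_mul _).sub (hi1.const_mul _)
    rw [integral_sub hi4 (hi3.const_mul _), integral_sub (hi2.const_mul _) (hi1.const_mul _),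
      integral_const_mul, integral_const_mul, integral_const_mul] at this
    linarith
  have hfin := (hasDerivAt_pow (n-1) ρ).fun_mul key
  refine hfin.congr_deriv ?_
  have hn1 : ρ ^ (n - 1) = ρ ^ (n - 1 - 1) * ρ := by rw [← pow_succ]; congr 1; omega
  have hc : ((n - 1 : ℕ) : ℝ) = (n : ℝ) - 1 := by rw [Nat.cast_sub (by omega)]; simp
  rw [hc]
  rw [show ρ ^ (n-1) * ∫ ω, ∑ j, pd j (V j) (ρ • ω) ∂(sig n) = ρ ^ (n-1-1) * (ρ * ∫ ω, ∑ j, pd j (V j) (ρ • ω) ∂(sig n)) by rw [hn1]; ring, hid, hn1]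
  ring
end
end Part2

section Part3
open MeasureTheory Metric Filter
noncomputable section

lemma pd_pd_symm {n : ℕ} {w : En n → ℝ} {x : En n} (hw : ContDiffAt ℝ 2 w x) (i k : Fin n) :
    pd i (pd k w) x = pd k (pd i w) x := by
  have hs := hw.isSymmSndFDerivAt (by simp)
  have hd : DifferentiableAt ℝ (fderiv ℝ w) x :=
    (hw.fderiv_right (m := 1) (by norm_num)).differentiableAt (by norm_num)
  have h : ∀ i k : Fin n, pd i (pd k w) x = fderiv ℝ (fderiv ℝ w) x (EuclideanSpace.single i 1) (EuclideanSpace.single k 1) := by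
    intro i k
    unfold pd
    rw [fderiv_clm_apply hd (by fun_prop)]
    simp
  rw [h, h]
  exact hs _ _

lemma pd_diffAt {n : ℕ} {w : En n → ℝ} {x : En n} (hw : ContDiffAt ℝ 2 w x) (k : Fin n) :
    DifferentiableAt ℝ (pd k w) x := by
  have hd : DifferentiableAt ℝ (fderiv ℝ w) x :=
    (hw.fderiv_right (m := 1) (by norm_num)).differentiableAt (by norm_num)
  unfold pd
  exact hd.clm_apply (by fun_prop)

/-- The Rellich-type vector field. -/
def Wf {n : ℕ} (A : Fin n → Fin n → En n → ℝ) (Z S : Fin n → En n → ℝ) (c : ℝ) (w : En n → ℝ) (i : Fin n) (y : En n) : ℝ :=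
  2 * ((∑ k, Z k y * pd k w y) * (∑ j, A i j y * pd j w y))
    - (∑ k, ∑ l, A k l y * (pd k w y * pd l w y)) * Z i y + (w y * w y) * Z i y - c * ((w y * w y) * S i y)

lemma div_Wf {n : ℕ} (A : Fin n → Fin n → En n → ℝ) (Z S : Fin n → En n → ℝ) (c : ℝ) (w : En n → ℝ) (x : En n)
    (hA : ∀ i j, DifferentiableAt ℝ (A i j) x) (hZ : ∀ i, DifferentiableAt ℝ (Z i) x) (hS : ∀ i, DifferentiableAt ℝ (S i) x)
    (hw : ContDiffAt ℝ 2 w x) (hsym : ∀ i j, A i j x = A j i x) :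
    ∑ i, pd i (Wf A Z S c w i) x =
      2 * (∑ k, Z k x * pd k w x) * (∑ i, pd i (fun y => ∑ j, A i j y * pd j w y) x)
      + ∑ k, ∑ l, (2 * (∑ i, pd i (Z k) x * A i l x) - ∑ i, Z i x * pd i (A k l) x
          - (∑ i, pd i (Z i) x) * A k l x) * (pd k w x * pd l w x)
      + 2 * w x * (∑ k, Z k x * pd k w x) - 2 * c * w x * (∑ k, S k x * pd k w x)
      + ((∑ i, pd i (Z i) x) - c * ∑ i, pd i (S i) x) * (w x * w x) := by
  have hp : ∀ k, DifferentiableAt ℝ (pd k w) x := pd_diffAt hw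
  have hwd : DifferentiableAt ℝ w x := hw.differentiableAt (by norm_num)
  have hs : DifferentiableAt ℝ (fun y => ∑ k, Z k y * pd k w y) x :=
    DifferentiableAt.fun_sum fun k _ => (hZ k).fun_mul (hp k)
  have hq : ∀ i, DifferentiableAt ℝ (fun y => ∑ j, A i j y * pd j w y) x := fun i =>
    DifferentiableAt.fun_sum fun k _ => (hA i k).mul (hp k)
  have hQ1 : ∀ k l, DifferentiableAt ℝ (fun y => A k l y * (pd k w y * pd l w y)) x := fun k l =>
    (hA k l).mul ((hp k).fun_mul (hp l))
  have hQ : DifferentiableAt ℝ (fun y => ∑ k, ∑ l, A k l y * (pd k w y * pd l w y)) x :=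
    DifferentiableAt.fun_sum fun k _ => DifferentiableAt.fun_sum fun l _ => hQ1 k l
  have hww : DifferentiableAt ℝ (fun y => w y * w y) x := hwd.mul hwd
  have hW : ∀ i, pd i (Wf A Z S c w i) x =
      2 * (pd i (fun y => ∑ k, Z k y * pd k w y) x * (∑ j, A i j x * pd j w x)
        + (∑ k, Z k x * pd k w x) * pd i (fun y => ∑ j, A i j y * pd j w y) x)
      - (pd i (fun y => ∑ k, ∑ l, A k l y * (pd k w y * pd l w y)) x * Z i x
        + (∑ k, ∑ l, A k l x * (pd k w x * pd l w x)) * pd i (Z i) x)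
      + ((pd i w x * w x + w x * pd i w x) * Z i x + w x * w x * pd i (Z i) x)
      - c * ((pd i w x * w x + w x * pd i w x) * S i x + w x * w x * pd i (S i) x) := by
    intro i
    have e1 := (hs.fun_mul (hq i)).const_mul 2
    have e2 := hQ.fun_mul (hZ i)
    have e3 := hww.fun_mul (hZ i)
    have e4 := (hww.fun_mul (hS i)).const_mul c
    unfold Wf
    rw [pd_sub i ((e1.fun_sub e2).fun_add e3) e4, pd_add i (e1.fun_sub e2) e3, pd_sub i e1 e2,
      pd_const_mul i 2 (hs.fun_mul (hq i)), pd_mul i hs (hq i), pd_mul i hQ (hZ i), pd_mul i hww (hZ i),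
      pd_const_mul i c (hww.fun_mul (hS i)), pd_mul i hww (hS i), pd_mul i hwd hwd]
  have hps : ∀ i, pd i (fun y => ∑ k, Z k y * pd k w y) x = ∑ k, (pd i (Z k) x * pd k w x + Z k x * pd i (pd k w) x) := by
    intro i
    rw [pd_sum i (fun k _ => (hZ k).fun_mul (hp k))]
    exact Finset.sum_congr rfl fun k _ => pd_mul i (hZ k) (hp k)
  have hpQ : ∀ i, pd i (fun y => ∑ k, ∑ l, A k l y * (pd k w y * pd l w y)) x
      = ∑ k, ∑ l, (pd i (A k l) x * (pd k w x * pd l w x) + A k l x * (pd i (pd k w) x * pd l w x + pd k w x * pd i (pd l w) x)) := by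
    intro i
    rw [pd_sum i (fun k _ => DifferentiableAt.fun_sum fun l _ => hQ1 k l)]
    refine Finset.sum_congr rfl fun k _ => ?_
    rw [pd_sum i (fun l _ => hQ1 k l)]
    refine Finset.sum_congr rfl fun l _ => ?_
    rw [pd_mul i (hA k l) ((hp k).fun_mul (hp l)), pd_mul i (hp k) (hp l)]
  have hH : ∀ i k, pd i (pd k w) x = pd k (pd i w) x := fun i k => pd_pd_symm hw i k
  simp only [hW, hps, hpQ]
  generalize hL : (fun i => pd i (fun y => ∑ j, A i j y * pd j w y) x) = L at *
  have hL' : ∀ i, pd i (fun y => ∑ j, A i j y * pd j w y) x = L i := fun i => congrFun hL i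
  simp only [hL']
  generalize hA0 : (fun i j => A i j x) = a at *
  have ha : ∀ i j, A i j x = a i j := fun i j => congrFun (congrFun hA0 i) j
  simp only [ha] at *
  generalize hH0 : (fun i k => pd i (pd k w) x) = H at *
  have hH1 : ∀ i j, pd i (pd j w) x = H i j := fun i j => congrFun (congrFun hH0 i) j
  simp only [hH1] at *
  generalize hP0 : (fun i => pd i w x) = p at *
  have hP1 : ∀ i, pd i w x = p i := fun i => congrFun hP0 i
  simp only [hP1] at *
  have c1 : ∑ i, ∑ k, ∑ j, Z k x * H i k * (a i j * p j) = ∑ i, ∑ k, ∑ l, a k l * (H i k * p l) * Z i x := by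
    rw [Finset.sum_comm]
    refine Finset.sum_congr rfl fun k _ => Finset.sum_congr rfl fun i _ => Finset.sum_congr rfl fun j _ => ?_
    rw [hH i k]; ring
  have c2 : ∑ i, ∑ k, ∑ l, a k l * (p k * H i l) * Z i x = ∑ i, ∑ k, ∑ l, a k l * (H i k * p l) * Z i x := by
    refine Finset.sum_congr rfl fun i _ => ?_
    rw [Finset.sum_comm]
    refine Finset.sum_congr rfl fun k _ => Finset.sum_congr rfl fun j _ => ?_
    rw [hsym j k]; ring
  have d1 : ∑ i, (∑ k, (pd i (Z k) x * p k + Z k x * H i k)) * (∑ j, a i j * p j)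
      = ∑ k, ∑ l, (∑ i, pd i (Z k) x * a i l) * (p k * p l) + ∑ i, ∑ k, ∑ j, Z k x * H i k * (a i j * p j) := by
    have : ∀ i, (∑ k, (pd i (Z k) x * p k + Z k x * H i k)) * (∑ j, a i j * p j)
       = ∑ k, ∑ l, pd i (Z k) x * a i l * (p k * p l) + ∑ k, ∑ j, Z k x * H i k * (a i j * p j) := by
      intro i
      rw [Finset.sum_mul_sum, ← Finset.sum_add_distrib]
      refine Finset.sum_congr rfl fun k _ => ?_
      rw [← Finset.sum_add_distrib]
      exact Finset.sum_congr rfl fun l _ => by ring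
    rw [Finset.sum_congr rfl fun i _ => this i]
    simp only [Finset.sum_add_distrib]
    congr 1
    rw [Finset.sum_comm]
    refine Finset.sum_congr rfl fun k _ => ?_
    rw [Finset.sum_comm]
    exact Finset.sum_congr rfl fun l _ => by rw [Finset.sum_mul]
  have d2 : ∑ i, (∑ k, ∑ l, (pd i (A k l) x * (p k * p l) + a k l * (H i k * p l + p k * H i l))) * Z i x
      = ∑ k, ∑ l, (∑ i, Z i x * pd i (A k l) x) * (p k * p l)
        + ∑ i, ∑ k, ∑ l, a k l * (H i k * p l) * Z i x + ∑ i, ∑ k, ∑ l, a k l * (p k * H i l) * Z i x := by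
    have : ∀ i, (∑ k, ∑ l, (pd i (A k l) x * (p k * p l) + a k l * (H i k * p l + p k * H i l))) * Z i x
       = ∑ k, ∑ l, Z i x * pd i (A k l) x * (p k * p l) + ∑ k, ∑ l, a k l * (H i k * p l) * Z i x + ∑ k, ∑ l, a k l * (p k * H i l) * Z i x := by
      intro i
      simp only [Finset.sum_mul, ← Finset.sum_add_distrib]
      exact Finset.sum_congr rfl fun k _ => Finset.sum_congr rfl fun l _ => by ring
    rw [Finset.sum_congr rfl fun i _ => this i]
    simp only [Finset.sum_add_distrib]
    congr 2
    rw [Finset.sum_comm]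
    refine Finset.sum_congr rfl fun k _ => ?_
    rw [Finset.sum_comm]
    exact Finset.sum_congr rfl fun l _ => by rw [Finset.sum_mul]
  have e1 : ∑ i, (2 * ((∑ k, (pd i (Z k) x * p k + Z k x * H i k)) * (∑ j, a i j * p j)
        + (∑ k, Z k x * p k) * L i)
      - ((∑ k, ∑ l, (pd i (A k l) x * (p k * p l) + a k l * (H i k * p l + p k * H i l))) * Z i x
        + (∑ k, ∑ l, a k l * (p k * p l)) * pd i (Z i) x)
      + ((p i * w x + w x * p i) * Z i x + w x * w x * pd i (Z i) x)
      - c * ((p i * w x + w x * p i) * S i x + w x * w x * pd i (S i) x)) =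
      2 * ∑ i, (∑ k, (pd i (Z k) x * p k + Z k x * H i k)) * (∑ j, a i j * p j) + 2 * ((∑ k, Z k x * p k) * ∑ i, L i)
      - ∑ i, (∑ k, ∑ l, (pd i (A k l) x * (p k * p l) + a k l * (H i k * p l + p k * H i l))) * Z i x
      - (∑ k, ∑ l, a k l * (p k * p l)) * ∑ i, pd i (Z i) x
      + 2 * w x * ∑ i, Z i x * p i + w x * w x * ∑ i, pd i (Z i) x
      - c * (2 * w x * ∑ i, S i x * p i + w x * w x * ∑ i, pd i (S i) x) := by
    simp only [Finset.mul_sum (s := Finset.univ) (f := fun i => L i), Finset.mul_sum (s := Finset.univ) (f := fun i => Z i x * p i) , Finset.mul_sum (s := Finset.univ) (f := fun i => S i x * p i), Finset.mul_sum (s := Finset.univ) (f := fun i => pd i (Z i) x), Finset.mul_sum (s := Finset.univ) (f := fun i => pd i (S i) x), ← Finset.sum_add_distrib]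
    rw [Finset.mul_sum, Finset.mul_sum, Finset.mul_sum]
    simp only [← Finset.sum_add_distrib, ← Finset.sum_sub_distrib]
    exact Finset.sum_congr rfl fun i _ => by ring
  rw [e1, d1, d2, c1, c2]
  have e2 : ∑ k, ∑ l, (2 * (∑ i, pd i (Z k) x * a i l) - ∑ i, Z i x * pd i (A k l) x
          - (∑ i, pd i (Z i) x) * a k l) * (p k * p l) =
      2 * ∑ k, ∑ l, (∑ i, pd i (Z k) x * a i l) * (p k * p l) - ∑ k, ∑ l, (∑ i, Z i x * pd i (A k l) x) * (p k * p l)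
      - (∑ i, pd i (Z i) x) * ∑ k, ∑ l, a k l * (p k * p l) := by
    rw [Finset.mul_sum, Finset.mul_sum]
    rw [← Finset.sum_sub_distrib, ← Finset.sum_sub_distrib]
    refine Finset.sum_congr rfl fun k _ => ?_
    rw [Finset.mul_sum, Finset.mul_sum, ← Finset.sum_sub_distrib, ← Finset.sum_sub_distrib]
    exact Finset.sum_congr rfl fun l _ => by ring
  rw [e2]
  ring
end
end Part3

section Part4
open MeasureTheory Metric Filter Topology
noncomputable section

/-- Components of `A(x) x`. -/
def AX {n : ℕ} (A : En n → Matrix (Fin n) (Fin n) ℝ) (i : Fin n) (x : En n) : ℝ := ∑ j, A x i j * x j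
/-- Components of `Z`. -/
def ZZ {n : ℕ} (A : En n → Matrix (Fin n) (Fin n) ℝ) (i : Fin n) (x : En n) : ℝ := (muA A x)⁻¹ * AX A i x
/-- Components of `A(x) x / r^2`. -/
def SS {n : ℕ} (A : En n → Matrix (Fin n) (Fin n) ℝ) (i : Fin n) (x : En n) : ℝ := (‖x‖ ^ 2)⁻¹ * AX A i x

lemma quadForm_eq {n : ℕ} (M : Matrix (Fin n) (Fin n) ℝ) (ξ η : En n) :
    quadForm M ξ η = ∑ i, (∑ j, M i j * ξ j) * η i := rfl

lemma muA_eq {n : ℕ} (A : En n → Matrix (Fin n) (Fin n) ℝ) (x : En n) :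
    muA A x = (∑ i, AX A i x * x i) * (‖x‖ ^ 2)⁻¹ := rfl

lemma Zvec_eq {n : ℕ} (A : En n → Matrix (Fin n) (Fin n) ℝ) (x : En n) (i : Fin n) :
    Zvec A x i = ZZ A i x := rfl

lemma gradient_coord {n : ℕ} (f : En n → ℝ) (x : En n) (i : Fin n) : gradient f x i = pd i f x := by
  unfold pd gradient
  have := InnerProductSpace.toDual_symm_apply (𝕜 := ℝ) (E := En n) (x := EuclideanSpace.single i (1:ℝ)) (y := fderiv ℝ f x)
  rw [← this, EuclideanSpace.inner_single_right]
  simp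

lemma norm_sq_sum {n : ℕ} (x : En n) : ‖x‖ ^ 2 = ∑ i, x i * x i := by
  rw [EuclideanSpace.norm_sq_eq]
  exact Finset.sum_congr rfl fun i _ => by rw [Real.norm_eq_abs, sq_abs, sq]

lemma pd_normsq {n : ℕ} (i : Fin n) (x : En n) : pd i (fun y : En n => ‖y‖ ^ 2) x = 2 * x i := by
  simp only [norm_sq_sum]
  rw [pd_sum i (fun k _ => (diffAt_coord k x).fun_mul (diffAt_coord k x))]
  simp only [pd_mul i (diffAt_coord _ x) (diffAt_coord _ x), pd_coord]
  simp [Finset.sum_add_distrib]; ring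

lemma diffAt_normsq {n : ℕ} (x : En n) : DifferentiableAt ℝ (fun y : En n => ‖y‖ ^ 2) x := by
  simp only [norm_sq_sum]
  exact DifferentiableAt.fun_sum fun k _ => (diffAt_coord k x).fun_mul (diffAt_coord k x)

lemma pd_inv {n : ℕ} {f : En n → ℝ} {x : En n} (i : Fin n) (hf : DifferentiableAt ℝ f x) (h0 : f x ≠ 0) :
    pd i (fun y => (f y)⁻¹) x = - pd i f x * ((f x)⁻¹ * (f x)⁻¹) := by
  have h : HasFDerivAt (fun y => (f y)⁻¹) (-(f x ^ 2)⁻¹ • fderiv ℝ f x) x :=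
    (hasDerivAt_inv h0).comp_hasFDerivAt x hf.hasFDerivAt
  unfold pd
  rw [h.fderiv]
  simp
  field_simp

section formulas
variable {n : ℕ} {A : En n → Matrix (Fin n) (Fin n) ℝ} {x : En n}

lemma AX_diff (hd : ∀ i j, DifferentiableAt ℝ (fun y => A y i j) x) (i : Fin n) : DifferentiableAt ℝ (AX A i) x :=
  DifferentiableAt.fun_sum fun j _ => (hd i j).fun_mul (diffAt_coord j x)

lemma pd_AX (hd : ∀ i j, DifferentiableAt ℝ (fun y => A y i j) x) (i k : Fin n) :
    pd i (AX A k) x = A x k i + ∑ j, pd i (fun y => A y k j) x * x j := by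
  unfold AX
  rw [pd_sum i (fun j _ => (hd k j).fun_mul (diffAt_coord j x))]
  simp only [pd_mul i (hd _ _) (diffAt_coord _ x), pd_coord]
  simp [Finset.sum_add_distrib]; ring

lemma mu_num_diff (hd : ∀ i j, DifferentiableAt ℝ (fun y => A y i j) x) :
    DifferentiableAt ℝ (fun y => ∑ i, AX A i y * y i) x :=
  DifferentiableAt.fun_sum fun j _ => (AX_diff hd j).fun_mul (diffAt_coord j x)

lemma mu_diff (hd : ∀ i j, DifferentiableAt ℝ (fun y => A y i j) x) (hx : x ≠ 0) : DifferentiableAt ℝ (muA A) x := by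
  have : muA A = fun y => (∑ i, AX A i y * y i) * (‖y‖ ^ 2)⁻¹ := rfl
  rw [this]
  exact (mu_num_diff hd).fun_mul ((diffAt_normsq x).fun_inv (by simpa using hx))

lemma pd_mu (hd : ∀ i j, DifferentiableAt ℝ (fun y => A y i j) x) (hx : x ≠ 0) (i : Fin n) :
    ‖x‖ * pd i (muA A) x = ∑ k, (pd i (AX A k) x * (x k / ‖x‖) + (AX A k x / ‖x‖) * (if i = k then 1 else 0))
      - 2 * muA A x * (x i / ‖x‖) := by
  have hr : ‖x‖ ≠ 0 := by simpa using hx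
  have : muA A = fun y => (∑ i, AX A i y * y i) * (‖y‖ ^ 2)⁻¹ := rfl
  rw [this, pd_mul i (mu_num_diff hd) ((diffAt_normsq x).fun_inv (by simpa using hx)), pd_inv i (diffAt_normsq x) (by simpa using hx),
    pd_normsq, pd_sum i (fun j _ => (AX_diff hd j).fun_mul (diffAt_coord j x))]
  simp only [pd_mul i (AX_diff hd _) (diffAt_coord _ x), pd_coord]
  rw [Finset.sum_congr rfl (fun k _ => show pd i (AX A k) x * (x k / ‖x‖) + (AX A k x / ‖x‖) * (if i = k then 1 else 0) =
    (pd i (AX A k) x * x k + AX A k x * (if i = k then 1 else 0)) * ‖x‖⁻¹ by field_simp), ← Finset.sum_mul]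
  field_simp
  ring

lemma ZZ_diff (hd : ∀ i j, DifferentiableAt ℝ (fun y => A y i j) x) (hx : x ≠ 0) (hm : muA A x ≠ 0) (i : Fin n) :
    DifferentiableAt ℝ (ZZ A i) x :=
  ((mu_diff hd hx).fun_inv hm).fun_mul (AX_diff hd i)

lemma SS_diff (hd : ∀ i j, DifferentiableAt ℝ (fun y => A y i j) x) (hx : x ≠ 0) (i : Fin n) :
    DifferentiableAt ℝ (SS A i) x :=
  ((diffAt_normsq x).fun_inv (by simpa using hx)).fun_mul (AX_diff hd i)

lemma pd_ZZ (hd : ∀ i j, DifferentiableAt ℝ (fun y => A y i j) x) (hx : x ≠ 0) (hm : muA A x ≠ 0) (i k : Fin n) :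
    pd i (ZZ A k) x = (muA A x)⁻¹ * pd i (AX A k) x -
      (muA A x)⁻¹ * (muA A x)⁻¹ * ((‖x‖ * pd i (muA A) x) * (AX A k x / ‖x‖)) := by
  have hr : ‖x‖ ≠ 0 := by simpa using hx
  unfold ZZ
  rw [pd_mul i ((mu_diff hd hx).fun_inv hm) (AX_diff hd k), pd_inv i (mu_diff hd hx) hm]
  field_simp
  ring

lemma pd_SS (hd : ∀ i j, DifferentiableAt ℝ (fun y => A y i j) x) (hx : x ≠ 0) (i k : Fin n) :
    pd i (SS A k) x = (‖x‖⁻¹ * ‖x‖⁻¹) * (pd i (AX A k) x - 2 * ((x i / ‖x‖) * (AX A k x / ‖x‖))) := by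
  have hr : ‖x‖ ≠ 0 := by simpa using hx
  unfold SS
  rw [pd_mul i ((diffAt_normsq x).fun_inv (by simpa using hx)) (AX_diff hd k), pd_inv i (diffAt_normsq x) (by simpa using hx), pd_normsq]
  field_simp
  ring
end formulas

/-- Filter at infinity. -/
abbrev lInf (n : ℕ) : Filter (En n) := comap norm atTop

/-- `f` is asymptotic to the bounded function `f₀` at infinity. -/
def Asy {n : ℕ} (f f₀ : En n → ℝ) : Prop :=
  Tendsto (fun x => f x - f₀ x) (lInf n) (𝓝 0) ∧ ∃ M, ∀ᶠ x in lInf n, |f₀ x| ≤ M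

namespace Asy
variable {n : ℕ} {f g f₀ g₀ : En n → ℝ}

lemma congr (h : Asy f f₀) (h1 : f =ᶠ[lInf n] g) (h2 : f₀ =ᶠ[lInf n] g₀) : Asy g g₀ := by
  refine ⟨h.1.congr' (by filter_upwards [h1, h2] with x e1 e2; rw [e1, e2]), ?_⟩
  obtain ⟨M, hM⟩ := h.2
  exact ⟨M, by filter_upwards [hM, h2] with x e1 e2; rwa [← e2]⟩

lemma const (c : ℝ) : Asy (fun _ : En n => c) (fun _ => c) := ⟨by simp only [sub_self]; exact tendsto_const_nhds, |c|, by simp⟩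

lemma add (hf : Asy f f₀) (hg : Asy g g₀) : Asy (fun x => f x + g x) (fun x => f₀ x + g₀ x) := by
  obtain ⟨M, hM⟩ := hf.2
  obtain ⟨K, hK⟩ := hg.2
  refine ⟨?_, M + K, ?_⟩
  · have := hf.1.add hg.1
    rw [add_zero] at this
    refine this.congr fun x => by ring
  · filter_upwards [hM, hK] with x h1 h2 using (abs_add_le _ _).trans (add_le_add h1 h2)

lemma mul (hf : Asy f f₀) (hg : Asy g g₀) : Asy (fun x => f x * g x) (fun x => f₀ x * g₀ x) := by
  obtain ⟨M, hM⟩ := hf.2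
  obtain ⟨K, hK⟩ := hg.2
  refine ⟨?_, M * K, ?_⟩
  · have h1 := hf.1.mul hg.1
    have b1 : IsBoundedUnder (· ≤ ·) (lInf n) (norm ∘ f₀) := ⟨M, by simpa using hM⟩
    have b2 : IsBoundedUnder (· ≤ ·) (lInf n) (norm ∘ g₀) := ⟨K, by simpa using hK⟩
    have h2 := hf.1.zero_mul_isBoundedUnder_le b2
    have h3 := hg.1.zero_mul_isBoundedUnder_le b1
    have := (h1.add h2).add h3
    simp only [mul_zero, add_zero] at this
    refine this.congr fun x => by ring
  · filter_upwards [hM, hK] with x h1 h2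
    rw [abs_mul]
    exact mul_le_mul h1 h2 (abs_nonneg _) ((abs_nonneg _).trans h1)

lemma const_mul (c : ℝ) (hf : Asy f f₀) : Asy (fun x => c * f x) (fun x => c * f₀ x) := (const c).mul hf

lemma sub (hf : Asy f f₀) (hg : Asy g g₀) : Asy (fun x => f x - g x) (fun x => f₀ x - g₀ x) :=
  (hf.add (hg.const_mul (-1))).congr (.of_eq (by funext x; ring)) (.of_eq (by funext x; ring))

lemma sum {ι : Type*} (s : Finset ι) {f f₀ : ι → En n → ℝ} (h : ∀ i ∈ s, Asy (f i) (f₀ i)) :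
    Asy (fun x => ∑ i ∈ s, f i x) (fun x => ∑ i ∈ s, f₀ i x) := by
  classical
  induction s using Finset.induction_on with
  | empty => simpa using const 0
  | insert a s ha ih =>
    simp only [Finset.sum_insert ha]
    exact (h a (Finset.mem_insert_self _ _)).add (ih fun i hi => h i (Finset.mem_insert_of_mem hi))

lemma inv_one (hf : Asy f (fun _ => 1)) : Asy (fun x => (f x)⁻¹) (fun _ => 1) := by
  refine ⟨?_, (const 1).2⟩
  have h1 : Tendsto f (lInf n) (𝓝 1) := by
    have := hf.1.add_const 1
    simpa using this
  have := (h1.inv₀ one_ne_zero).sub_const 1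
  simpa using this
end Asy

lemma lInf_eventually {n : ℕ} {P : En n → Prop} : (∀ᶠ x in lInf n, P x) ↔ ∃ R : ℝ, ∀ x, R ≤ ‖x‖ → P x := by
  rw [((atTop_basis (α := ℝ)).comap (norm : En n → ℝ)).eventually_iff]
  simp
end
end Part4

section Part5
open MeasureTheory Metric Filter Topology
noncomputable section

section asymptotics
variable {n : ℕ} {A : En n → Matrix (Fin n) (Fin n) ℝ} {lam α C : ℝ}

lemma Omega_ev (n : ℕ) : ∀ᶠ x in lInf n, x ∈ OmegaExt n :=
  lInf_eventually.2 ⟨2, fun x hx => show 1 < ‖x‖ by linarith⟩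

lemma Omega_ne {x : En n} (hx : x ∈ OmegaExt n) : x ≠ 0 := by
  rintro rfl
  have : (1:ℝ) < ‖(0 : En n)‖ := hx
  simp at this
  linarith

lemma Omega_norm_pos {x : En n} (hx : x ∈ OmegaExt n) : 0 < ‖x‖ := norm_pos_iff.2 (Omega_ne hx)

lemma A_diff (hA : EllipticDecay A lam α C) {x : En n} (hx : x ∈ OmegaExt n) (i j : Fin n) :
    DifferentiableAt ℝ (fun y => A y i j) x :=
  ((hA.2.1 i j).contDiffAt ((isOpen_Omega n).mem_nhds hx)).differentiableAt (by norm_num)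

lemma mu_ge (hA : EllipticDecay A lam α C) {x : En n} (hx : x ∈ OmegaExt n) : lam ≤ muA A x := by
  have h := (hA.2.2.1 x hx x).1
  have h0 := Omega_norm_pos hx
  unfold muA
  rw [le_div_iff₀ (by positivity)]
  exact h

lemma norm_coord_le (x : En n) (i : Fin n) : |x i| ≤ ‖x‖ := by
  have := EuclideanSpace.norm_sq_eq x
  refine abs_le_of_sq_le_sq ?_ (norm_nonneg _)
  rw [this]
  calc x i ^ 2 = ‖x i‖ ^ 2 := by simp
    _ ≤ _ := Finset.single_le_sum (f := fun i => ‖x i‖ ^ 2) (fun i _ => by positivity) (Finset.mem_univ i)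

lemma decay_bounds (hA : EllipticDecay A lam α C) {x : En n} (hx : x ∈ OmegaExt n) (i j k : Fin n) :
    |A x i j - if i = j then 1 else 0| ≤ C * ‖x‖ ^ (-α) ∧ |‖x‖ * pd k (fun y => A y i j) x| ≤ C * ‖x‖ ^ (-α) := by
  have h := hA.2.2.2 x hx i j
  have e1 : (A x - 1) i j = A x i j - if i = j then 1 else 0 := by
    simp [Matrix.one_apply]
  have e2 : pd k (fun y => (A y - 1) i j) x = pd k (fun y => A y i j) x := by
    have : (fun y => (A y - 1) i j) = fun y => A y i j - (1 : Matrix (Fin n) (Fin n) ℝ) i j := by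
      funext y; simp
    rw [this]; unfold pd; rw [fderiv_sub_const]
  rw [e1] at h
  have h1 : |pd k (fun y => A y i j) x| ≤ ‖gradient (fun y => (A y - 1) i j) x‖ := by
    rw [← e2, ← gradient_coord]; exact norm_coord_le _ _
  constructor
  · have : 0 ≤ ‖x‖ * ‖gradient (fun y => (A y - 1) i j) x‖ := by positivity
    linarith
  · rw [abs_mul, abs_norm]
    have := mul_le_mul_of_nonneg_left h1 (norm_nonneg x)
    have := abs_nonneg (A x i j - if i = j then 1 else 0)
    linarith

lemma decay_tendsto (hα : 0 < α) : Tendsto (fun x : En n => C * ‖x‖ ^ (-α)) (lInf n) (𝓝 0) := by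
  have := ((tendsto_rpow_neg_atTop hα).comp (tendsto_comap (f := (norm : En n → ℝ)) (x := atTop))).const_mul C
  rw [mul_zero] at this
  exact this

lemma asy_A (hA : EllipticDecay A lam α C) (hα : 0 < α) (i j : Fin n) :
    Asy (fun x => A x i j) (fun _ => if i = j then 1 else 0) := by
  refine ⟨?_, (Asy.const _).2⟩
  refine squeeze_zero_norm' ?_ (decay_tendsto (C := C) hα)
  filter_upwards [Omega_ev n] with x hx using (decay_bounds hA hx i j i).1

lemma asy_dA (hA : EllipticDecay A lam α C) (hα : 0 < α) (i j k : Fin n) :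
    Asy (fun x => ‖x‖ * pd k (fun y => A y i j) x) (fun _ => 0) := by
  refine ⟨?_, (Asy.const _).2⟩
  refine squeeze_zero_norm' ?_ (decay_tendsto (C := C) hα)
  filter_upwards [Omega_ev n] with x hx
  simpa using (decay_bounds hA hx i j k).2

lemma asy_nu (i : Fin n) : Asy (fun x : En n => x i / ‖x‖) (fun x => x i / ‖x‖) := by
  refine ⟨by simp only [sub_self]; exact tendsto_const_nhds, 1, Eventually.of_forall fun x => ?_⟩
  rw [abs_div, abs_norm]
  exact div_le_one_of_le₀ (norm_coord_le x i) (norm_nonneg _)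

lemma asy_rinv : Asy (fun x : En n => ‖x‖⁻¹) (fun _ => 0) := by
  refine ⟨?_, (Asy.const _).2⟩
  simp only [sub_zero]
  exact tendsto_inv_atTop_zero.comp tendsto_comap

lemma asy_AXr (hA : EllipticDecay A lam α C) (hα : 0 < α) (i : Fin n) :
    Asy (fun x => AX A i x / ‖x‖) (fun x => x i / ‖x‖) := by
  refine (Asy.sum Finset.univ fun j _ => (asy_A hA hα i j).mul (asy_nu j)).congr (.of_eq ?_) (.of_eq ?_)
  · funext x; simp only [AX, Finset.sum_div]; exact Finset.sum_congr rfl fun j _ => by ring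
  · funext x; simp

lemma nu_sum {x : En n} (hx : x ∈ OmegaExt n) : ∑ i, (x i / ‖x‖) * (x i / ‖x‖) = 1 := by
  have h0 := Omega_norm_pos hx
  have : ∀ i, (x i / ‖x‖) * (x i / ‖x‖) = x i * x i * (‖x‖ ^ 2)⁻¹ := fun i => by field_simp
  simp only [this, ← Finset.sum_mul, ← norm_sq_sum]
  field_simp

lemma asy_mu (hA : EllipticDecay A lam α C) (hα : 0 < α) : Asy (muA A) (fun _ => 1) := by
  refine (Asy.sum Finset.univ fun j _ => (asy_AXr hA hα j).mul (asy_nu j)).congr ?_ ?_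
  · filter_upwards [Omega_ev n] with x hx
    rw [muA_eq, Finset.sum_mul]
    have h0 := Omega_norm_pos hx
    exact Finset.sum_congr rfl fun j _ => by field_simp
  · filter_upwards [Omega_ev n] with x hx using nu_sum hx

lemma asy_muinv (hA : EllipticDecay A lam α C) (hα : 0 < α) : Asy (fun x => (muA A x)⁻¹) (fun _ => 1) :=
  (asy_mu hA hα).inv_one

lemma asy_dAX (hA : EllipticDecay A lam α C) (hα : 0 < α) (i k : Fin n) :
    Asy (fun x => pd i (AX A k) x) (fun _ => if i = k then 1 else 0) := by
  refine ((asy_A hA hα k i).add (Asy.sum Finset.univ fun j _ => (asy_dA hA hα k j i).mul (asy_nu j))).congr ?_ ?_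
  · filter_upwards [Omega_ev n] with x hx
    rw [pd_AX (A_diff hA hx)]
    have h0 := Omega_norm_pos hx
    congr 1
    exact Finset.sum_congr rfl fun j _ => by field_simp
  · exact .of_eq (by funext x; simp [eq_comm])

lemma asy_dmu (hA : EllipticDecay A lam α C) (hα : 0 < α) (i : Fin n) :
    Asy (fun x => ‖x‖ * pd i (muA A) x) (fun _ => 0) := by
  refine ((Asy.sum Finset.univ fun k _ => ((asy_dAX hA hα i k).mul (asy_nu k)).add ((asy_AXr hA hα k).mul (Asy.const (if i = k then (1:ℝ) else 0)))).sub
    (((asy_mu hA hα).const_mul 2).mul (asy_nu i))).congr ?_ ?_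
  · filter_upwards [Omega_ev n] with x hx
    rw [pd_mu (A_diff hA hx) (Omega_ne hx)]
  · exact .of_eq (by funext x; simp [Finset.sum_add_distrib]; ring)

lemma asy_dZ (hA : EllipticDecay A lam α C) (hlam : 0 < lam) (hα : 0 < α) (i k : Fin n) :
    Asy (fun x => pd i (ZZ A k) x) (fun _ => if i = k then 1 else 0) := by
  refine (((asy_muinv hA hα).mul (asy_dAX hA hα i k)).sub
    (((asy_muinv hA hα).mul (asy_muinv hA hα)).mul ((asy_dmu hA hα i).mul (asy_AXr hA hα k)))).congr ?_ ?_
  · filter_upwards [Omega_ev n] with x hx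
    rw [pd_ZZ (A_diff hA hx) (Omega_ne hx) (hlam.trans_le (mu_ge hA hx)).ne']
  · exact .of_eq (by funext x; simp)

lemma asy_Zr (hA : EllipticDecay A lam α C) (hα : 0 < α) (k : Fin n) :
    Asy (fun x => ZZ A k x / ‖x‖) (fun x => x k / ‖x‖) := by
  refine ((asy_muinv hA hα).mul (asy_AXr hA hα k)).congr (.of_eq ?_) (.of_eq ?_)
  · funext x; simp only [ZZ]; ring
  · funext x; ring

lemma asy_dS (hA : EllipticDecay A lam α C) (hα : 0 < α) (i k : Fin n) :
    Asy (fun x => pd i (SS A k) x) (fun _ => 0) := by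
  refine ((asy_rinv.mul asy_rinv).mul ((asy_dAX hA hα i k).sub (((asy_nu i).mul (asy_AXr hA hα k)).const_mul 2))).congr ?_ ?_
  · filter_upwards [Omega_ev n] with x hx
    rw [pd_SS (A_diff hA hx) (Omega_ne hx)]
  · exact .of_eq (by funext x; simp)

/-- zero-order coefficient in the equation of `w`. -/
def kap {n : ℕ} (A : En n → Matrix (Fin n) (Fin n) ℝ) (a : ℝ) (x : En n) : ℝ :=
  (‖x‖ ^ 2)⁻¹ * (-2 * a ^ 2 * muA A x + a * ((a - 2) * muA A x + ∑ i, pd i (AX A i) x))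

/-- Coefficients of the quadratic form. -/
def Tco {n : ℕ} (A : En n → Matrix (Fin n) (Fin n) ℝ) (δ : ℝ) (k l : Fin n) (x : En n) : ℝ :=
  2 * (∑ i, pd i (ZZ A k) x * A x i l) - ∑ i, ZZ A i x * pd i (fun y => A y k l) x
          - (∑ i, pd i (ZZ A i) x) * A x k l + (2 * ((n:ℝ) - 1) - 2 * (n - δ)) * (muA A x * (‖x‖ ^ 2)⁻¹ * (ZZ A k x * ZZ A l x))
          + (n - δ) * A x k l

def bco {n : ℕ} (A : En n → Matrix (Fin n) (Fin n) ℝ) (a c : ℝ) (k : Fin n) (x : En n) : ℝ :=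
  2 * (kap A a x - c * (muA A x * (‖x‖ ^ 2)⁻¹)) * ZZ A k x

def dco {n : ℕ} (A : En n → Matrix (Fin n) (Fin n) ℝ) (δ c : ℝ) (x : En n) : ℝ :=
  ∑ i, pd i (ZZ A i) x - c * ∑ i, pd i (SS A i) x - (n - δ) * (1 - c * (muA A x * (‖x‖ ^ 2)⁻¹))

lemma asy_T (hA : EllipticDecay A lam α C) (hlam : 0 < lam) (hα : 0 < α) (δ : ℝ) (k l : Fin n) :
    Asy (Tco A δ k l) (fun x => (2 - δ) * (if k = l then 1 else 0) - 2 * (1 - δ) * ((x k / ‖x‖) * (x l / ‖x‖))) := by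
  refine (((((Asy.sum Finset.univ fun i _ => (asy_dZ hA hlam hα i k).mul (asy_A hA hα i l)).const_mul 2).sub
    (Asy.sum Finset.univ fun i _ => (asy_Zr hA hα i).mul (asy_dA hA hα k l i))).sub
    ((Asy.sum Finset.univ fun i _ => asy_dZ hA hlam hα i i).mul (asy_A hA hα k l))).add
    (((asy_mu hA hα).mul ((asy_Zr hA hα k).mul (asy_Zr hA hα l))).const_mul (2 * ((n:ℝ) - 1) - 2 * (n - δ)))).add
    ((asy_A hA hα k l).const_mul (n - δ)) |>.congr ?_ ?_
  · filter_upwards [Omega_ev n] with x hx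
    have h0 := Omega_norm_pos hx
    unfold Tco
    have e1 : ∑ i, ZZ A i x / ‖x‖ * (‖x‖ * pd i (fun y => A y k l) x) = ∑ i, ZZ A i x * pd i (fun y => A y k l) x :=
      Finset.sum_congr rfl fun j _ => by field_simp
    have e2 : muA A x * (ZZ A k x / ‖x‖ * (ZZ A l x / ‖x‖)) = muA A x * (‖x‖ ^ 2)⁻¹ * (ZZ A k x * ZZ A l x) := by field_simp
    rw [e1, e2]
  · refine .of_eq ?_
    funext x
    by_cases h : k = l
    · subst h; simp; ring
    · simp [h, Ne.symm h]; ring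

lemma asy_b (hA : EllipticDecay A lam α C) (hα : 0 < α) (a c : ℝ) (k : Fin n) :
    Asy (bco A a c k) (fun _ => 0) := by
  refine ((((asy_rinv.mul ((((asy_mu hA hα).const_mul (-2 * a ^ 2)).add
    ((((asy_mu hA hα).const_mul (a - 2)).add (Asy.sum Finset.univ fun i _ => asy_dAX hA hα i i)).const_mul a)).sub
    ((asy_mu hA hα).const_mul c))).const_mul 2).mul (asy_Zr hA hα k))).congr ?_ ?_
  · filter_upwards [Omega_ev n] with x hx
    have h0 := Omega_norm_pos hx
    unfold bco kap
    field_simp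
  · exact .of_eq (by funext x; simp)

lemma asy_d (hA : EllipticDecay A lam α C) (hlam : 0 < lam) (hα : 0 < α) (δ c : ℝ) :
    Asy (dco A δ c) (fun _ => δ) := by
  refine (((Asy.sum Finset.univ fun i _ => asy_dZ hA hlam hα i i).sub
    ((Asy.sum Finset.univ fun i _ => asy_dS hA hα i i).const_mul c)).sub
    (((Asy.const 1).sub (((asy_mu hA hα).mul (asy_rinv.mul asy_rinv)).const_mul c)).const_mul (n - δ))).congr ?_ ?_
  · filter_upwards [Omega_ev n] with x hx
    have h0 := Omega_norm_pos hx
    unfold dco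
    congr 4
    field_simp
  · exact .of_eq (by funext x; simp)

lemma form_lower (hA : EllipticDecay A lam α C) (hlam : 0 < lam) (hα : 0 < α) (δ a c : ℝ) (hδ0 : 0 < δ) (hδ1 : δ < 1) :
    ∃ R : ℝ, 1 < R ∧ ∀ x : En n, R ≤ ‖x‖ → ∀ (p : Fin n → ℝ) (w : ℝ),
      δ / 2 * ((∑ k, p k ^ 2) + w ^ 2) ≤ ∑ k, ∑ l, Tco A δ k l x * (p k * p l) + (∑ k, bco A a c k x * p k) * w + dco A δ c x * w ^ 2 := by
  set ε : ℝ := δ / (4 * (n + 1)) with hε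
  have hε0 : 0 < ε := by positivity
  have ev : ∀ {f f₀ : En n → ℝ}, Asy f f₀ → ∀ᶠ x in lInf n, |f x - f₀ x| ≤ ε := by
    intro f f₀ h
    have := h.1.eventually (Metric.closedBall_mem_nhds (0:ℝ) hε0)
    filter_upwards [this] with x hx
    simpa [Real.dist_eq] using hx
  have h1 : ∀ᶠ x in lInf n, ∀ k l, |Tco A δ k l x - ((2 - δ) * (if k = l then 1 else 0) - 2 * (1 - δ) * ((x k / ‖x‖) * (x l / ‖x‖)))| ≤ ε :=
    eventually_all.2 fun k => eventually_all.2 fun l => ev (asy_T hA hlam hα δ k l)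
  have h2 : ∀ᶠ x in lInf n, ∀ k, |bco A a c k x - 0| ≤ ε := eventually_all.2 fun k => ev (asy_b hA hα a c k)
  have h3 := ev (asy_d hA hlam hα δ c)
  obtain ⟨R, hR⟩ := lInf_eventually.1 ((h1.and h2).and (h3.and (Omega_ev n)))
  refine ⟨max R 2, by simp, fun x hx p w => ?_⟩
  obtain ⟨⟨H1, H2⟩, H3, hxO⟩ := hR x ((le_max_left _ _).trans hx)
  set P := ∑ k, p k ^ 2 with hP
  have hP0 : 0 ≤ P := Finset.sum_nonneg fun k _ => sq_nonneg _
  set ν : Fin n → ℝ := fun k => x k / ‖x‖ with hν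
  have CS : (∑ k, ν k * p k) ^ 2 ≤ P := by
    have := Finset.sum_mul_sq_le_sq_mul_sq Finset.univ ν p
    have e : ∑ k, ν k ^ 2 = 1 := by
      rw [← nu_sum hxO]; exact Finset.sum_congr rfl fun k _ => sq _
    rw [e, one_mul] at this
    exact this
  have T1 : ∀ k l, ((2 - δ) * (if k = l then 1 else 0) - 2 * (1 - δ) * (ν k * ν l)) * (p k * p l) - ε * ((p k ^ 2 + p l ^ 2) / 2)
      ≤ Tco A δ k l x * (p k * p l) := by
    intro k l
    have e := H1 k l
    have hh : |p k * p l| ≤ (p k ^ 2 + p l ^ 2) / 2 := by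
      rw [abs_le]; constructor <;> nlinarith [sq_nonneg (p k - p l), sq_nonneg (p k + p l)]
    have h4 := mul_le_mul e hh (abs_nonneg _) hε0.le
    rw [← abs_mul] at h4
    have := (abs_le.1 h4).1
    simp only [hν]
    nlinarith
  have T2 : ∑ k, ∑ l, (((2 - δ) * (if k = l then 1 else 0) - 2 * (1 - δ) * (ν k * ν l)) * (p k * p l) - ε * ((p k ^ 2 + p l ^ 2) / 2))
     = (2 - δ) * P - 2 * (1 - δ) * (∑ k, ν k * p k) ^ 2 - ε * n * P := by
    have e1 : ∀ k l, (((2 - δ) * (if k = l then 1 else 0) - 2 * (1 - δ) * (ν k * ν l)) * (p k * p l) - ε * ((p k ^ 2 + p l ^ 2) / 2))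
       = (2 - δ) * (if k = l then p k * p l else 0) - 2 * (1 - δ) * ((ν k * p k) * (ν l * p l)) - ε / 2 * (p k ^ 2 + p l ^ 2) := by
      intro k l; split_ifs <;> ring
    simp only [e1, Finset.sum_sub_distrib, ← Finset.mul_sum, Finset.sum_add_distrib]
    rw [sq (∑ k, ν k * p k), Finset.sum_mul]
    simp [← sq, ← hP, ← Finset.mul_sum]
    ring
  have T3 := Finset.sum_le_sum fun k (_ : k ∈ Finset.univ) => Finset.sum_le_sum fun l (_ : l ∈ Finset.univ) => T1 k l
  rw [T2] at T3
  have B1 : ∀ k, - (ε * ((p k ^ 2 + w ^ 2) / 2)) ≤ bco A a c k x * p k * w := by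
    intro k
    have e := H2 k
    rw [sub_zero] at e
    have hh : |p k * w| ≤ (p k ^ 2 + w ^ 2) / 2 := by
      rw [abs_le]; constructor <;> nlinarith [sq_nonneg (p k - w), sq_nonneg (p k + w)]
    have h4 := mul_le_mul e hh (abs_nonneg _) hε0.le
    rw [← abs_mul] at h4
    have := (abs_le.1 h4).1
    rw [mul_assoc]
    exact this
  have B2 := Finset.sum_le_sum fun k (_ : k ∈ Finset.univ) => B1 k
  have B3 : ∑ k : Fin n, - (ε * ((p k ^ 2 + w ^ 2) / 2)) = - (ε / 2 * P) - n * (ε / 2 * w ^ 2) := by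
    have : ∀ k, - (ε * ((p k ^ 2 + w ^ 2) / 2)) = - (ε / 2) * p k ^ 2 - (ε / 2 * w ^ 2) := fun k => by ring
    simp only [this, Finset.sum_sub_distrib, ← Finset.mul_sum, ← hP]
    simp
    ring
  rw [B3, ← Finset.sum_mul] at B2
  have D1 : (δ - ε) * w ^ 2 ≤ dco A δ c x * w ^ 2 :=
    mul_le_mul_of_nonneg_right (by linarith [(abs_le.1 H3).1]) (sq_nonneg _)
  have E1 : ε * (n + 1) = δ / 4 := by rw [hε]; field_simp
  have E2 : 0 ≤ (ε * n) := by positivity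
  have C1 : 2 * (1 - δ) * (∑ k, ν k * p k) ^ 2 ≤ 2 * (1 - δ) * P := mul_le_mul_of_nonneg_left CS (by linarith)
  have hE3 : ε ≤ δ / 4 := by linarith
  have F1 : ε * n * P + ε / 2 * P ≤ δ / 4 * P := by nlinarith
  have F2 : n * (ε / 2 * w ^ 2) + ε * w ^ 2 ≤ δ / 4 * w ^ 2 := by nlinarith [sq_nonneg w]
  nlinarith [sq_nonneg w]
end asymptotics
end
end Part5

section Part6
open MeasureTheory Metric Filter Topology
noncomputable section

section equation
variable {n : ℕ} {A : En n → Matrix (Fin n) (Fin n) ℝ} {lam α C : ℝ}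

lemma rpow_norm_eq (b : ℝ) (y : En n) : ‖y‖ ^ b = (‖y‖ ^ 2) ^ (b / 2) := by
  rw [← Real.rpow_natCast, ← Real.rpow_mul (norm_nonneg _)]
  congr 1
  push_cast; ring

lemma rpow_norm_contDiffAt (b : ℝ) {x : En n} (hx : x ≠ 0) (m : WithTop ℕ∞) : ContDiffAt ℝ m (fun y : En n => ‖y‖ ^ b) x := by
  simp only [rpow_norm_eq b]
  exact (contDiff_norm_sq ℝ).contDiffAt.rpow_const_of_ne (by simpa using hx)

lemma rpow_norm_diff (b : ℝ) {x : En n} (hx : x ≠ 0) : DifferentiableAt ℝ (fun y : En n => ‖y‖ ^ b) x :=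
  (rpow_norm_contDiffAt b hx 1).differentiableAt (by norm_num)

lemma pd_rpow (b : ℝ) {x : En n} (hx : x ≠ 0) (i : Fin n) : pd i (fun y : En n => ‖y‖ ^ b) x = b * ‖x‖ ^ (b - 2) * x i := by
  have h0 : ‖x‖ ^ 2 ≠ 0 := by simpa using hx
  have h : HasFDerivAt (fun y : En n => (‖y‖ ^ 2) ^ (b / 2)) (((b / 2) * (‖x‖ ^ 2) ^ (b / 2 - 1)) • fderiv ℝ (fun y : En n => ‖y‖ ^ 2) x) x := by
    have h1 : HasDerivAt (fun t : ℝ => t ^ (b / 2)) ((b / 2) * (‖x‖ ^ 2) ^ (b / 2 - 1)) (‖x‖ ^ 2) := Real.hasDerivAt_rpow_const (Or.inl h0)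
    exact HasDerivAt.comp_hasFDerivAt (f := fun y : En n => ‖y‖ ^ 2) x h1 (diffAt_normsq x).hasFDerivAt
  have e := pd_normsq i x
  unfold pd at e ⊢
  simp only [rpow_norm_eq b]
  rw [h.fderiv, rpow_norm_eq (b - 2)]
  simp only [smul_apply, smul_eq_mul, e]
  rw [show (b - 2) / 2 = b / 2 - 1 by ring]
  ring

/-- `w = r^a v`. -/
def wv {n : ℕ} (a : ℝ) (v : En n → ℝ) (x : En n) : ℝ := ‖x‖ ^ a * v x

lemma pd_wv (a : ℝ) {v : En n → ℝ} {x : En n} (hx : x ≠ 0) (hv : DifferentiableAt ℝ v x) (j : Fin n) :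
    pd j (wv a v) x = ‖x‖ ^ a * pd j v x + a * (‖x‖ ^ (a - 2) * (x j * v x)) := by
  unfold wv
  rw [pd_mul j (rpow_norm_diff a hx) hv, pd_rpow a hx]
  ring

lemma pd_congr {f g : En n → ℝ} {x : En n} (h : f =ᶠ[𝓝 x] g) (i : Fin n) : pd i f x = pd i g x := by
  unfold pd; rw [h.fderiv_eq]

/-- `div (A ∇ v)`. -/
def LA {n : ℕ} (A : En n → Matrix (Fin n) (Fin n) ℝ) (v : En n → ℝ) (x : En n) : ℝ :=
  ∑ i, pd i (fun y => ∑ j, A y i j * pd j v y) x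

lemma AXx (hx0 : (x : En n) ≠ 0) : ∑ i, AX A i x * x i = ‖x‖ ^ 2 * muA A x := by
  rw [muA_eq]
  have : ‖x‖ ≠ 0 := by simpa using hx0
  field_simp

lemma ZZ_sum {x : En n} (hm : muA A x ≠ 0) (p : Fin n → ℝ) : ∑ k, AX A k x * p k = muA A x * ∑ k, ZZ A k x * p k := by
  rw [Finset.mul_sum]
  refine Finset.sum_congr rfl fun k _ => ?_
  unfold ZZ
  field_simp

lemma SS_sum {x : En n} (hm : muA A x ≠ 0) (p : Fin n → ℝ) : ∑ k, SS A k x * p k = (‖x‖ ^ 2)⁻¹ * muA A x * ∑ k, ZZ A k x * p k := by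
  rw [mul_assoc, ← ZZ_sum hm, Finset.mul_sum]
  refine Finset.sum_congr rfl fun k _ => ?_
  unfold SS
  ring

lemma AX_symm {x : En n} (hs : (A x).IsSymm) (p : Fin n → ℝ) : ∑ i, x i * (∑ j, A x i j * p j) = ∑ j, AX A j x * p j := by
  simp only [Finset.mul_sum, AX, Finset.sum_mul]
  rw [Finset.sum_comm]
  refine Finset.sum_congr rfl fun j _ => Finset.sum_congr rfl fun i _ => ?_
  rw [hs.apply j i]; ring

lemma LA_wv (hA : EllipticDecay A lam α C) (hlam : 0 < lam) (a : ℝ) {v : En n → ℝ} (hv : ContDiff ℝ 2 v) {x : En n} (hx : x ∈ OmegaExt n) :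
    LA A (wv a v) x = ‖x‖ ^ a * LA A v x + 2 * a * (muA A x * (‖x‖ ^ 2)⁻¹) * (∑ k, ZZ A k x * pd k (wv a v) x) + kap A a x * wv a v x := by
  have hx0 := Omega_ne hx
  have hr := Omega_norm_pos hx
  have hm : muA A x ≠ 0 := (hlam.trans_le (mu_ge hA hx)).ne'
  have hd := A_diff hA hx
  have hvd : ∀ y, DifferentiableAt ℝ v y := fun y => hv.contDiffAt.differentiableAt (by norm_num)
  have hpv : ∀ k, DifferentiableAt ℝ (pd k v) x := pd_diffAt hv.contDiffAt
  have hF : ∀ i, DifferentiableAt ℝ (fun y => ∑ j, A y i j * pd j v y) x := fun i =>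
    DifferentiableAt.fun_sum fun k _ => (hd i k).fun_mul (hpv k)
  have hN : ∀ i, DifferentiableAt ℝ (fun y => v y * AX A i y) x := fun i => (hvd x).fun_mul (AX_diff hd i)
  have e1 : ∀ i, pd i (fun y => ∑ j, A y i j * pd j (wv a v) y) x =
      ‖x‖ ^ a * pd i (fun y => ∑ j, A y i j * pd j v y) x + a * ‖x‖ ^ (a-2) * x i * (∑ j, A x i j * pd j v x)
       + a * ((a - 2) * ‖x‖ ^ (a - 2 - 2) * x i * (v x * AX A i x) + ‖x‖ ^ (a - 2) * (pd i v x * AX A i x + v x * pd i (AX A i) x)) := by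
    intro i
    have : (fun y => ∑ j, A y i j * pd j (wv a v) y) =ᶠ[𝓝 x]
        fun y => ‖y‖ ^ a * (∑ j, A y i j * pd j v y) + a * (‖y‖ ^ (a - 2) * (v y * AX A i y)) := by
      filter_upwards [isOpen_ne.mem_nhds hx0] with y hy
      simp only [AX, Finset.mul_sum, ← Finset.sum_add_distrib]
      refine Finset.sum_congr rfl fun j _ => ?_
      rw [pd_wv a hy (hvd y)]
      ring
    rw [pd_congr this, pd_add i ((rpow_norm_diff a hx0).fun_mul (hF i)) (((rpow_norm_diff (a-2) hx0).fun_mul (hN i)).const_mul a),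
      pd_mul i (rpow_norm_diff a hx0) (hF i), pd_const_mul i a ((rpow_norm_diff (a-2) hx0).fun_mul (hN i)),
      pd_mul i (rpow_norm_diff (a-2) hx0) (hN i), pd_mul i (hvd x) (AX_diff hd i), pd_rpow a hx0, pd_rpow (a-2) hx0]
    ring
  have ra : ‖x‖ ^ a = ‖x‖ ^ (a - 2) * ‖x‖ ^ 2 := by
    rw [← Real.rpow_natCast, ← Real.rpow_add hr]; congr 1; push_cast; ring
  have ra2 : ‖x‖ ^ (a - 2) = ‖x‖ ^ (a - 2 - 2) * ‖x‖ ^ 2 := by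
    rw [← Real.rpow_natCast, ← Real.rpow_add hr]; congr 1; push_cast; ring
  have e2 : LA A (wv a v) x = ‖x‖ ^ a * LA A v x + a * ‖x‖ ^ (a-2) * (∑ i, x i * (∑ j, A x i j * pd j v x))
      + a * ((a - 2) * ‖x‖ ^ (a - 2 - 2) * v x * (∑ i, AX A i x * x i) + ‖x‖ ^ (a - 2) * (∑ i, AX A i x * pd i v x + v x * ∑ i, pd i (AX A i) x)) := by
    unfold LA
    simp only [e1]
    simp only [Finset.mul_sum, Finset.sum_add_distrib, mul_add]
    congr 1
    · congr 1
      refine Finset.sum_congr rfl fun i _ => Finset.sum_congr rfl fun j _ => by ring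
    · congr 1
      · refine Finset.sum_congr rfl fun i _ => by ring
      · congr 1
        refine Finset.sum_congr rfl fun i _ => by ring
  have hs : (A x).IsSymm := hA.1 x hx
  have e3 : muA A x * ∑ k, ZZ A k x * pd k (wv a v) x = ‖x‖ ^ a * (∑ i, AX A i x * pd i v x) + a * ‖x‖ ^ (a-2) * v x * (‖x‖ ^ 2 * muA A x) := by
    rw [← ZZ_sum hm, ← AXx hx0, Finset.mul_sum, Finset.mul_sum, ← Finset.sum_add_distrib]
    refine Finset.sum_congr rfl fun i _ => ?_
    rw [pd_wv a hx0 (hvd x)]; ring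
  have e4 : 2 * a * (muA A x * (‖x‖ ^ 2)⁻¹) * (∑ k, ZZ A k x * pd k (wv a v) x) = 2 * a * (‖x‖ ^ 2)⁻¹ * (muA A x * ∑ k, ZZ A k x * pd k (wv a v) x) := by ring
  rw [e2, AX_symm hs, AXx hx0, e4, e3]
  unfold kap wv
  generalize (∑ i, AX A i x * pd i v x) = X
  generalize (∑ i, pd i (AX A i) x) = Y
  generalize LA A v x = L
  generalize muA A x = m
  rw [ra, ra2]
  have := hr.ne'
  field_simp
  ring

/-- Integrand of `G`. -/
def gI {n : ℕ} (A : En n → Matrix (Fin n) (Fin n) ℝ) (c : ℝ) (w : En n → ℝ) (x : En n) : ℝ :=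
  2 * (((∑ k, ZZ A k x * pd k w x) / ‖x‖) ^ 2 * muA A x) - (∑ k, ∑ l, A x k l * (pd k w x * pd l w x)) + w x ^ 2
    - c * (w x ^ 2 / ‖x‖ ^ 2 * muA A x)

/-- The vector field. -/
def WW {n : ℕ} (A : En n → Matrix (Fin n) (Fin n) ℝ) (c : ℝ) (w : En n → ℝ) (i : Fin n) : En n → ℝ :=
  Wf (fun i j y => A y i j) (ZZ A) (SS A) c w i

lemma x_WW (hA : EllipticDecay A lam α C) (hlam : 0 < lam) (c : ℝ) (w : En n → ℝ) {x : En n} (hx : x ∈ OmegaExt n) :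
    ∑ i, x i * WW A c w i x = ‖x‖ ^ 2 * gI A c w x := by
  have hx0 := Omega_ne hx
  have hr := Omega_norm_pos hx
  have hm : muA A x ≠ 0 := (hlam.trans_le (mu_ge hA hx)).ne'
  have hs : (A x).IsSymm := hA.1 x hx
  have z1 : ∑ i, x i * ZZ A i x = ‖x‖ ^ 2 := by
    have := ZZ_sum hm (A := A) (x := x) x
    rw [AXx hx0, mul_comm] at this
    have := mul_left_cancel₀ hm this
    rw [this]
    exact Finset.sum_congr rfl fun i _ => mul_comm _ _
  have z2 : ∑ i, x i * SS A i x = muA A x := by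
    have := SS_sum hm (A := A) (x := x) x
    have e : ∑ k, ZZ A k x * x k = ‖x‖ ^ 2 := by rw [← z1]; exact Finset.sum_congr rfl fun i _ => mul_comm _ _
    rw [e] at this
    rw [Finset.sum_congr rfl fun i _ => mul_comm _ _, this]
    field_simp
  have z3 := AX_symm hs (fun j => pd j w x)
  rw [ZZ_sum hm] at z3
  unfold WW Wf gI
  have e : ∑ i, x i * (2 * ((∑ k, ZZ A k x * pd k w x) * ∑ j, A x i j * pd j w x) - (∑ k, ∑ l, A x k l * (pd k w x * pd l w x)) * ZZ A i x +
        w x * w x * ZZ A i x - c * (w x * w x * SS A i x)) =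
      2 * (∑ k, ZZ A k x * pd k w x) * (∑ i, x i * ∑ j, A x i j * pd j w x) - (∑ k, ∑ l, A x k l * (pd k w x * pd l w x)) * (∑ i, x i * ZZ A i x)
      + w x * w x * (∑ i, x i * ZZ A i x) - c * (w x * w x) * (∑ i, x i * SS A i x) := by
    simp only [Finset.mul_sum (s := Finset.univ) (f := fun i => x i * ∑ j, A x i j * pd j w x), Finset.mul_sum (s := Finset.univ) (f := fun i => x i * ZZ A i x), Finset.mul_sum (s := Finset.univ) (f := fun i => x i * SS A i x), ← Finset.sum_add_distrib, ← Finset.sum_sub_distrib]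
    exact Finset.sum_congr rfl fun i _ => by ring
  rw [e, z1, z2, z3]
  field_simp

lemma div_WW (hA : EllipticDecay A lam α C) (hlam : 0 < lam) (a c δ : ℝ) (ha : a = ((n:ℝ) - 1) / 2) {v : En n → ℝ} (hv : ContDiff ℝ 2 v)
    {x : En n} (hx : x ∈ OmegaExt n) :
    ∑ i, pd i (WW A c (wv a v) i) x - (n - δ) * gI A c (wv a v) x =
      2 * (∑ k, ZZ A k x * pd k (wv a v) x) * (‖x‖ ^ a * (LA A v x + v x))
      + (∑ k, ∑ l, Tco A δ k l x * (pd k (wv a v) x * pd l (wv a v) x) + (∑ k, bco A a c k x * pd k (wv a v) x) * wv a v x + dco A δ c x * wv a v x ^ 2) := by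
  have hx0 := Omega_ne hx
  have hr := Omega_norm_pos hx
  have hm : muA A x ≠ 0 := (hlam.trans_le (mu_ge hA hx)).ne'
  have hs : (A x).IsSymm := hA.1 x hx
  have hd := A_diff hA hx
  have hw : ContDiffAt ℝ 2 (wv a v) x := (rpow_norm_contDiffAt a hx0 2).mul hv.contDiffAt
  have L := LA_wv hA hlam a hv hx
  unfold WW
  rw [div_Wf _ _ _ c _ x hd (ZZ_diff hd hx0 hm) (SS_diff hd hx0) hw (fun i j => hs.apply j i)]
  change 2 * _ * LA A (wv a v) x + _ + _ - _ + _ - _ = _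
  rw [L, SS_sum hm]
  have hwv : wv a v x = ‖x‖ ^ a * v x := rfl
  have t1 : ∑ k, ∑ l, Tco A δ k l x * (pd k (wv a v) x * pd l (wv a v) x) =
     ∑ k, ∑ l, (2 * (∑ i, pd i (ZZ A k) x * A x i l) - ∑ i, ZZ A i x * pd i (fun y => A y k l) x
          - (∑ i, pd i (ZZ A i) x) * A x k l) * (pd k (wv a v) x * pd l (wv a v) x)
     + (2 * ((n:ℝ) - 1) - 2 * (n - δ)) * (muA A x * (‖x‖ ^ 2)⁻¹) * (∑ k, ZZ A k x * pd k (wv a v) x) ^ 2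
     + (n - δ) * ∑ k, ∑ l, A x k l * (pd k (wv a v) x * pd l (wv a v) x) := by
    rw [sq (∑ k, ZZ A k x * pd k (wv a v) x), Finset.sum_mul_sum, Finset.mul_sum, Finset.mul_sum, ← Finset.sum_add_distrib, ← Finset.sum_add_distrib]
    refine Finset.sum_congr rfl fun k _ => ?_
    rw [Finset.mul_sum, Finset.mul_sum, ← Finset.sum_add_distrib, ← Finset.sum_add_distrib]
    refine Finset.sum_congr rfl fun l _ => ?_
    unfold Tco
    ring
  have t2 : ∑ k, bco A a c k x * pd k (wv a v) x = 2 * (kap A a x - c * (muA A x * (‖x‖ ^ 2)⁻¹)) * ∑ k, ZZ A k x * pd k (wv a v) x := by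
    rw [Finset.mul_sum]
    exact Finset.sum_congr rfl fun k _ => by unfold bco; ring
  rw [t1, t2]
  unfold dco gI
  generalize (∑ k, ∑ l, (2 * (∑ i, pd i (ZZ A k) x * A x i l) - ∑ i, ZZ A i x * pd i (fun y => A y k l) x
          - (∑ i, pd i (ZZ A i) x) * A x k l) * (pd k (wv a v) x * pd l (wv a v) x)) = Q
  generalize (∑ k, ∑ l, A x k l * (pd k (wv a v) x * pd l (wv a v) x)) = Q2
  generalize (∑ k, ZZ A k x * pd k (wv a v) x) = s
  generalize LA A v x = LL
  generalize kap A a x = K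
  rw [ha] at *
  rw [hwv]
  generalize ‖x‖ ^ (((n:ℝ) - 1) / 2) = q
  field_simp
  ring
end equation
end
end Part6

section Part7
open MeasureTheory Metric Filter Topology
noncomputable section

section growth
variable {n : ℕ} {A : En n → Matrix (Fin n) (Fin n) ℝ} {lam α C : ℝ}

lemma coord_contDiffOn (i : Fin n) (U : Set (En n)) : ContDiffOn ℝ 1 (fun x : En n => x i) U := by
  fun_prop

lemma AX_C1 (hA : EllipticDecay A lam α C) (i : Fin n) : ContDiffOn ℝ 1 (AX A i) (OmegaExt n) :=
  ContDiffOn.sum fun j _ => (hA.2.1 i j).mul (coord_contDiffOn j _)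

lemma normsq_inv_C1 : ContDiffOn ℝ 1 (fun x : En n => (‖x‖ ^ 2)⁻¹) (OmegaExt n) :=
  ((contDiff_norm_sq ℝ).contDiffOn).inv fun x hx => by simpa using Omega_ne hx

lemma mu_C1 (hA : EllipticDecay A lam α C) : ContDiffOn ℝ 1 (muA A) (OmegaExt n) :=
  (ContDiffOn.sum fun i _ => (AX_C1 hA i).mul (coord_contDiffOn i _)).mul normsq_inv_C1

lemma ZZ_C1 (hA : EllipticDecay A lam α C) (hlam : 0 < lam) (i : Fin n) : ContDiffOn ℝ 1 (ZZ A i) (OmegaExt n) :=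
  ((mu_C1 hA).inv fun x hx => (hlam.trans_le (mu_ge hA hx)).ne').mul (AX_C1 hA i)

lemma SS_C1 (hA : EllipticDecay A lam α C) (i : Fin n) : ContDiffOn ℝ 1 (SS A i) (OmegaExt n) :=
  normsq_inv_C1.mul (AX_C1 hA i)

lemma wv_C (a : ℝ) {v : En n → ℝ} {m : WithTop ℕ∞} (hv : ContDiffOn ℝ m v (OmegaExt n)) : ContDiffOn ℝ m (wv a v) (OmegaExt n) :=
  ContDiffOn.mul (fun x hx => (rpow_norm_contDiffAt a (Omega_ne hx) m).contDiffWithinAt) hv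

lemma pd_C1 {w : En n → ℝ} (hw : ContDiffOn ℝ 2 w (OmegaExt n)) (k : Fin n) : ContDiffOn ℝ 1 (pd k w) (OmegaExt n) :=
  (hw.fderiv_of_isOpen (isOpen_Omega n) (m := 1) (by norm_num)).clm_apply contDiffOn_const

lemma WW_C1 (hA : EllipticDecay A lam α C) (hlam : 0 < lam) (c : ℝ) {w : En n → ℝ} (hw : ContDiffOn ℝ 2 w (OmegaExt n)) (i : Fin n) :
    ContDiffOn ℝ 1 (WW A c w i) (OmegaExt n) := by
  have hw1 : ContDiffOn ℝ 1 w (OmegaExt n) := hw.of_le (by norm_num)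
  have hp := pd_C1 hw
  have hZ := ZZ_C1 hA hlam
  have hS := SS_C1 hA
  have h1 : ContDiffOn ℝ 1 (fun y => ∑ k, ZZ A k y * pd k w y) (OmegaExt n) := ContDiffOn.sum fun k _ => (hZ k).mul (hp k)
  have h2 : ContDiffOn ℝ 1 (fun y => ∑ j, A y i j * pd j w y) (OmegaExt n) := ContDiffOn.sum fun k _ => (hA.2.1 i k).mul (hp k)
  have h3 : ContDiffOn ℝ 1 (fun y => ∑ k, ∑ l, A y k l * (pd k w y * pd l w y)) (OmegaExt n) :=
    ContDiffOn.sum fun k _ => ContDiffOn.sum fun l _ => (hA.2.1 k l).mul ((hp k).mul (hp l))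
  exact (((contDiffOn_const.mul (h1.mul h2)).sub (h3.mul (hZ i))).add ((hw1.mul hw1).mul (hZ i))).sub (contDiffOn_const.mul ((hw1.mul hw1).mul (hS i)))

lemma comp_sphere {f : En n → ℝ} (hf : ContinuousOn f (OmegaExt n)) {ρ : ℝ} (hρ : 1 < ρ) :
    ContinuousOn (fun ω => f (ρ • ω)) (sphere (0 : En n) 1) := by
  refine hf.comp (by fun_prop) fun ω hω => ?_
  have : ‖ω‖ = 1 := by simpa using hω
  change 1 < ‖ρ • ω‖
  rw [norm_smul, this, Real.norm_eq_abs, abs_of_pos (by linarith)]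
  linarith

lemma g_parts (hA : EllipticDecay A lam α C) (hlam : 0 < lam) {w : En n → ℝ} (hw : ContDiffOn ℝ 1 w (OmegaExt n)) :
    ContinuousOn (fun x => ((∑ k, ZZ A k x * pd k w x) / ‖x‖) ^ 2 * muA A x) (OmegaExt n) ∧
    ContinuousOn (fun x => ∑ k, ∑ l, A x k l * (pd k w x * pd l w x)) (OmegaExt n) ∧
    ContinuousOn (fun x => w x ^ 2) (OmegaExt n) ∧
    ContinuousOn (fun x => w x ^ 2 / ‖x‖ ^ 2 * muA A x) (OmegaExt n) := by
  have hp := fun k => pd_continuousOn k (isOpen_Omega n) hw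
  have hZ := fun k => (ZZ_C1 hA hlam k).continuousOn
  have hm := (mu_C1 hA).continuousOn
  have hAc := fun k l => (hA.2.1 k l).continuousOn
  have hN : ContinuousOn (fun x : En n => ‖x‖) (OmegaExt n) := continuous_norm.continuousOn
  refine ⟨?_, ?_, hw.continuousOn.pow 2, ?_⟩
  · exact (((continuousOn_finsetSum _ fun k _ => (hZ k).mul (hp k)).div hN fun x hx => (Omega_norm_pos hx).ne').pow 2).mul hm
  · exact continuousOn_finsetSum _ fun k _ => continuousOn_finsetSum _ fun l _ => (hAc k l).mul ((hp k).mul (hp l))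
  · exact ((hw.continuousOn.pow 2).div (hN.pow 2) fun x hx => pow_ne_zero _ (Omega_norm_pos hx).ne').mul hm

lemma gI_cont (hA : EllipticDecay A lam α C) (hlam : 0 < lam) (c : ℝ) {w : En n → ℝ} (hw : ContDiffOn ℝ 1 w (OmegaExt n)) :
    ContinuousOn (gI A c w) (OmegaExt n) := by
  obtain ⟨h1, h2, h3, h4⟩ := g_parts hA hlam hw
  exact (((continuousOn_const.mul h1).sub h2).add h3).sub (continuousOn_const.mul h4)

lemma int4 {μ : Measure (En n)} {f1 f2 f3 f4 : En n → ℝ} (c : ℝ) (i1 : Integrable f1 μ) (i2 : Integrable f2 μ) (i3 : Integrable f3 μ) (i4 : Integrable f4 μ) :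
    ∫ ω, (2 * f1 ω - f2 ω + f3 ω - c * f4 ω) ∂μ = 2 * ∫ ω, f1 ω ∂μ - ∫ ω, f2 ω ∂μ + ∫ ω, f3 ω ∂μ - c * ∫ ω, f4 ω ∂μ := by
  have j1 : Integrable (fun ω => 2 * f1 ω) μ := i1.const_mul 2
  have j2 : Integrable (fun ω => 2 * f1 ω - f2 ω) μ := j1.sub i2
  have j3 : Integrable (fun ω => 2 * f1 ω - f2 ω + f3 ω) μ := j2.add i3
  rw [integral_sub j3 (i4.const_mul c), integral_add j2 i3, integral_sub j1 i2, integral_const_mul, integral_const_mul]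

lemma Gfun_eq (hn : 2 ≤ n) (hA : EllipticDecay A lam α C) (hlam : 0 < lam) {v : En n → ℝ} (hv : ContDiffOn ℝ 1 v (OmegaExt n))
    {ρ : ℝ} (hρ : 1 < ρ) :
    Gfun A v ρ = ρ ^ (n - 1) * ∫ ω, gI A (((n : ℝ) - 1) * ((n : ℝ) - 3) / 4) (wv (((n:ℝ) - 1) / 2) v) (ρ • ω) ∂(sig n) := by
  set c := ((n : ℝ) - 1) * ((n : ℝ) - 3) / 4
  set a := ((n:ℝ) - 1) / 2
  have hw : ContDiffOn ℝ 1 (wv a v) (OmegaExt n) := wv_C a hv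
  obtain ⟨h1, h2, h3, h4⟩ := g_parts hA hlam hw
  have i1 := sig_integrable hn (comp_sphere h1 hρ)
  have i2 := sig_integrable hn (comp_sphere h2 hρ)
  have i3 := sig_integrable hn (comp_sphere h3 hρ)
  have i4 := sig_integrable hn (comp_sphere h4 hρ)
  have e0 : Gfun A v ρ = 2 * sphInt n ρ (fun x => ((∑ k, ZZ A k x * pd k (wv a v) x) / ‖x‖) ^ 2 * muA A x)
    - sphInt n ρ (fun x => ∑ k, ∑ l, A x k l * (pd k (wv a v) x * pd l (wv a v) x))
    + sphInt n ρ (fun x => (wv a v x) ^ 2)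
    - c * sphInt n ρ (fun x => (wv a v x) ^ 2 / ‖x‖ ^ 2 * muA A x) := by
    unfold Gfun
    simp only
    change 2 * sphInt n ρ (fun x => (Zd A (wv a v) x / ‖x‖) ^ 2 * muA A x)
      - sphInt n ρ (fun x => quadForm (A x) (gradient (wv a v) x) (gradient (wv a v) x)) + _ - _ = _
    have q1 : ∀ x, Zd A (wv a v) x = ∑ k, ZZ A k x * pd k (wv a v) x := fun x => by
      unfold Zd; exact Finset.sum_congr rfl fun k _ => by rw [gradient_coord, Zvec_eq]
    have q2 : ∀ x, quadForm (A x) (gradient (wv a v) x) (gradient (wv a v) x) = ∑ k, ∑ l, A x k l * (pd k (wv a v) x * pd l (wv a v) x) := fun x => by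
      rw [quadForm_eq]
      refine Finset.sum_congr rfl fun k _ => ?_
      rw [Finset.sum_mul]
      exact Finset.sum_congr rfl fun l _ => by rw [gradient_coord, gradient_coord]; ring
    simp only [q1, q2]
    rfl
  rw [e0]
  simp only [sphInt_eq n hn ρ (by linarith)]
  unfold gI
  rw [int4 c i1 i2 i3 i4]
  ring

lemma G_deriv (hn : 2 ≤ n) (hA : EllipticDecay A lam α C) (hlam : 0 < lam) {v : En n → ℝ} (hv : ContDiff ℝ 2 v)
    {ρ : ℝ} (hρ : 1 < ρ) (a c δ : ℝ) (ha : a = ((n:ℝ) - 1) / 2) (hc : c = ((n : ℝ) - 1) * ((n : ℝ) - 3) / 4) :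
    HasDerivAt (fun s => Gfun A v s / s ^ ((n:ℝ) - 1 - δ))
      (ρ ^ (δ - 1) * ∫ ω, (∑ i, pd i (WW A c (wv a v) i) (ρ • ω) - (n - δ) * gI A c (wv a v) (ρ • ω)) ∂(sig n)) ρ := by
  have hw : ContDiffOn ℝ 2 (wv a v) (OmegaExt n) := wv_C a hv.contDiffOn
  have hW := WW_C1 hA hlam c hw
  have h1 := sphere_div hn (fun i => WW A c (wv a v) i) hW ρ hρ
  have hv1 : ContDiffOn ℝ 1 v (OmegaExt n) := (hv.of_le (by norm_num)).contDiffOn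
  have key : ∀ s : ℝ, 1 < s → s ^ (n-1) * ∫ ω, ∑ j, ω j * WW A c (wv a v) j (s • ω) ∂(sig n) = s * Gfun A v s := by
    intro s hs
    rw [Gfun_eq hn hA hlam hv1 hs, ← ha, ← hc]
    have : ∫ ω, ∑ j, ω j * WW A c (wv a v) j (s • ω) ∂(sig n) = ∫ ω, s * gI A c (wv a v) (s • ω) ∂(sig n) := by
      refine integral_congr_ae ?_
      filter_upwards [sig_ae n] with ω hω
      have hω1 : ‖ω‖ = 1 := by simpa using hω
      have hns : ‖s • ω‖ = s := by rw [norm_smul, hω1, Real.norm_eq_abs, abs_of_pos (by linarith), mul_one]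
      have hx : s • ω ∈ OmegaExt n := by change 1 < ‖s • ω‖; rw [hns]; exact hs
      have := x_WW hA hlam c (wv a v) hx
      rw [hns] at this
      have e : ∑ i, (s • ω) i * WW A c (wv a v) i (s • ω) = s * ∑ i, ω i * WW A c (wv a v) i (s • ω) := by
        rw [Finset.mul_sum]; exact Finset.sum_congr rfl fun i _ => by simp [mul_assoc]
      rw [e, sq, mul_assoc] at this
      exact mul_left_cancel₀ (by linarith) this
    rw [this, integral_const_mul]
    ring
  have hρ0 : 0 < ρ := by linarith
  have h2 := h1.fun_mul (Real.hasDerivAt_rpow_const (x := ρ) (p := δ - n) (Or.inl hρ0.ne'))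
  have hev : (fun s => Gfun A v s / s ^ ((n:ℝ) - 1 - δ)) =ᶠ[𝓝 ρ] fun s => (s ^ (n-1) * ∫ ω, ∑ j, ω j * WW A c (wv a v) j (s • ω) ∂(sig n)) * s ^ (δ - n) := by
    filter_upwards [lt_mem_nhds hρ] with s hs
    rw [key s hs, div_eq_mul_inv, ← Real.rpow_neg (by linarith), mul_comm s, mul_assoc]
    congr 1
    rw [show -((n:ℝ) - 1 - δ) = 1 + (δ - n) by ring, Real.rpow_add (by linarith), Real.rpow_one]
  have h3 := h2.congr_of_eventuallyEq hev
  refine h3.congr_deriv ?_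
  rw [key ρ hρ, Gfun_eq hn hA hlam hv1 hρ, ← ha, ← hc]
  have i1 : Integrable (fun ω => ∑ i, pd i (WW A c (wv a v) i) (ρ • ω)) (sig n) :=
    sig_integrable hn (comp_sphere (f := fun x => ∑ i, pd i (WW A c (wv a v) i) x) (continuousOn_finsetSum _ fun i _ => pd_continuousOn i (isOpen_Omega n) (hW i)) hρ)
  have i2 := sig_integrable hn (comp_sphere (gI_cont hA hlam c (hw.of_le (by norm_num))) hρ)
  rw [integral_sub i1 (i2.const_mul _), integral_const_mul]
  have r1 : ρ ^ (δ - 1) = ρ ^ (n-1) * ρ ^ (δ - n) := by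
    rw [← Real.rpow_natCast, ← Real.rpow_add hρ0]; congr 1; rw [Nat.cast_sub (by omega)]; push_cast; ring
  have r2 : ρ * ρ ^ (δ - n - 1) = ρ ^ (δ - n) := by
    rw [show ρ ^ (δ - n) = ρ ^ (1 + (δ - n - 1)) by congr 1; ring, Real.rpow_add hρ0, Real.rpow_one]
  rw [r1]
  generalize (∫ ω, gI A c (wv a v) (ρ • ω) ∂(sig n)) = I1
  have : ρ * (ρ ^ (n-1) * I1) * ((δ - n) * ρ ^ (δ - n - 1)) = (ρ ^ (n-1) * I1) * (δ - n) * (ρ * ρ ^ (δ - n - 1)) := by ring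
  rw [this, r2]
  ring

lemma young_aux {δ Z2 P s0 q F : ℝ} (hδ0 : 0 < δ) (hZ2 : 0 ≤ Z2) (hP : 0 ≤ P) (CS : s0 ^ 2 ≤ Z2 * P) :
    - (δ / 2 * P) - 2 / δ * Z2 * q ^ 2 * F ^ 2 ≤ 2 * s0 * (q * F) := by
  by_contra hcon
  push Not at hcon
  set X := 2 * s0 * (q * F) with hX
  set U := δ / 2 * P
  set V := 2 / δ * Z2 * q ^ 2 * F ^ 2
  have hU : 0 ≤ U := by positivity
  have hV : 0 ≤ V := by positivity
  have hsq : (U + V) ^ 2 < X ^ 2 := by nlinarith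
  have hX2 : X ^ 2 ≤ 4 * (Z2 * P) * (q * F) ^ 2 := by
    have : X ^ 2 = 4 * s0 ^ 2 * (q * F) ^ 2 := by rw [hX]; ring
    rw [this]
    gcongr
  have hYY : 4 * (Z2 * P) * (q * F) ^ 2 = 4 * U * V := by simp only [U, V]; field_simp
  nlinarith [sq_nonneg (U - V)]

set_option maxHeartbeats 1000000 in
lemma H_lower (hn : 2 ≤ n) (hA : EllipticDecay A lam α C) (hlam : 0 < lam) (hα : 0 < α) (δ : ℝ) (hδ0 : 0 < δ) (hδ1 : δ < 1) :
    ∃ R : ℝ, 1 < R ∧ ∀ ρ₁ ρ₂, R ≤ ρ₁ → ρ₁ ≤ ρ₂ → ∃ K : ℝ, ∀ (η : ℝ) (v : En n → ℝ), ContDiff ℝ 2 v →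
      (∀ x, ρ₁ ≤ ‖x‖ → ‖x‖ ≤ ρ₂ → |LA A v x + v x| ≤ η) →
      Gfun A v ρ₁ / ρ₁ ^ ((n:ℝ) - 1 - δ) - K * η ^ 2 ≤ Gfun A v ρ₂ / ρ₂ ^ ((n:ℝ) - 1 - δ) := by
  set c := ((n : ℝ) - 1) * ((n : ℝ) - 3) / 4 with hc
  set a := ((n:ℝ) - 1) / 2 with ha
  have := sig_finite n hn
  obtain ⟨R, hR, hform⟩ := form_lower hA hlam hα δ a c hδ0 hδ1
  refine ⟨R, hR, fun ρ₁ ρ₂ h1 h2 => ?_⟩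
  have hcomp : IsCompact {x : En n | ρ₁ ≤ ‖x‖ ∧ ‖x‖ ≤ ρ₂} := by
    refine (isCompact_closedBall (0 : En n) ρ₂).of_isClosed_subset ?_ fun x hx => by simpa using hx.2
    exact (isClosed_le continuous_const continuous_norm).inter (isClosed_le continuous_norm continuous_const)
  have hsub : {x : En n | ρ₁ ≤ ‖x‖ ∧ ‖x‖ ≤ ρ₂} ⊆ OmegaExt n := fun x hx => show 1 < ‖x‖ from (hR.trans_le h1).trans_le hx.1
  have hcont : ContinuousOn (fun x => 2 / δ * (∑ k, ZZ A k x ^ 2) * (‖x‖ ^ a) ^ 2) (OmegaExt n) := by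
    refine (continuousOn_const.mul (continuousOn_finsetSum _ fun k _ => (ZZ_C1 hA hlam k).continuousOn.pow 2)).mul ?_
    exact ContinuousOn.pow (fun x hx => (rpow_norm_contDiffAt a (Omega_ne hx) 1).continuousAt.continuousWithinAt) 2
  obtain ⟨M, hM⟩ := hcomp.exists_bound_of_continuousOn (hcont.mono hsub)
  set S := (sig n).real Set.univ with hS
  refine ⟨S * |M| * (ρ₂ - ρ₁), fun η v hv hη => ?_⟩
  have hder : ∀ s : ℝ, 1 < s → _ := fun s hs => G_deriv hn hA hlam hv hs a c δ ha hc
  have hmv := (convex_Icc ρ₁ ρ₂).mul_sub_le_image_sub_of_le_deriv (f := fun s => Gfun A v s / s ^ ((n:ℝ) - 1 - δ)) (C := - (S * |M| * η ^ 2))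
    (fun s hs => (hder s (by linarith [hs.1])).continuousAt.continuousWithinAt)
    (fun s hs => (hder s (by rw [interior_Icc] at hs; linarith [hs.1])).differentiableAt.differentiableWithinAt)
    (fun s hs => ?_) ρ₁ (Set.left_mem_Icc.2 h2) ρ₂ (Set.right_mem_Icc.2 h2) h2
  · linarith
  · rw [interior_Icc] at hs
    have hs1 : 1 < s := by linarith [hs.1]
    rw [(hder s hs1).deriv]
    have hintg : - (|M| * η ^ 2) * S ≤ ∫ ω, (∑ i, pd i (WW A c (wv a v) i) (s • ω) - (n - δ) * gI A c (wv a v) (s • ω)) ∂(sig n) := by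
      have hc1 : ∫ ω, (- (|M| * η ^ 2)) ∂(sig n) = - (|M| * η ^ 2) * S := by
        rw [integral_const, smul_eq_mul, mul_comm]
      rw [← hc1]
      have hw : ContDiffOn ℝ 2 (wv a v) (OmegaExt n) := wv_C a hv.contDiffOn
      have i1 : Integrable (fun ω => ∑ i, pd i (WW A c (wv a v) i) (s • ω)) (sig n) :=
        sig_integrable hn (comp_sphere (f := fun x => ∑ i, pd i (WW A c (wv a v) i) x)
          (continuousOn_finsetSum _ fun i _ => pd_continuousOn i (isOpen_Omega n) (WW_C1 hA hlam c hw i)) hs1)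
      have i2 := sig_integrable hn (comp_sphere (gI_cont hA hlam c (hw.of_le (by norm_num))) hs1)
      refine integral_mono_ae (integrable_const _) (i1.sub (i2.const_mul _)) ?_
      filter_upwards [sig_ae n] with ω hω
      have hω1 : ‖ω‖ = 1 := by simpa using hω
      have hns : ‖s • ω‖ = s := by rw [norm_smul, hω1, Real.norm_eq_abs, abs_of_pos (by linarith), mul_one]
      set x := s • ω
      have hxin : x ∈ {x : En n | ρ₁ ≤ ‖x‖ ∧ ‖x‖ ≤ ρ₂} := by
        rw [Set.mem_ofPred_eq, hns]; exact ⟨hs.1.le, hs.2.le⟩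
      have hx := hsub hxin
      rw [div_WW hA hlam a c δ ha hv hx]
      have hf := hform x (h1.trans hxin.1) (fun k => pd k (wv a v) x) (wv a v x)
      have hfe := hη x hxin.1 hxin.2
      have hMx := hM x hxin
      set p : Fin n → ℝ := fun k => pd k (wv a v) x
      have CS := Finset.sum_mul_sq_le_sq_mul_sq Finset.univ (fun k => ZZ A k x) p
      set Z2 := ∑ k, ZZ A k x ^ 2
      set P := ∑ k, p k ^ 2
      set s0 := ∑ k, ZZ A k x * p k
      have hZ2 : 0 ≤ Z2 := Finset.sum_nonneg fun k _ => sq_nonneg _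
      have hP : 0 ≤ P := Finset.sum_nonneg fun k _ => sq_nonneg _
      set q := ‖x‖ ^ a
      set F := LA A v x + v x
      have hF2 : F ^ 2 ≤ η ^ 2 := by rw [← sq_abs F]; exact pow_le_pow_left₀ (abs_nonneg _) hfe 2
      have hMM : 2 / δ * Z2 * q ^ 2 ≤ |M| := (le_abs_self _).trans (hMx.trans (le_abs_self _))
      have y1 : - (δ / 2 * P) - 2 / δ * Z2 * q ^ 2 * F ^ 2 ≤ 2 * s0 * (q * F) := young_aux hδ0 hZ2 hP CS
      have y2 : 2 / δ * Z2 * q ^ 2 * F ^ 2 ≤ |M| * η ^ 2 := mul_le_mul hMM hF2 (sq_nonneg _) (abs_nonneg _)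
      have y3 : 0 ≤ δ / 2 * wv a v x ^ 2 := by positivity
      have hf' := hf
      rw [mul_add] at hf'
      linarith
    have hpow : s ^ (δ - 1) ≤ 1 := Real.rpow_le_one_of_one_le_of_nonpos hs1.le (by linarith)
    have hpow0 : 0 ≤ s ^ (δ - 1) := Real.rpow_nonneg (by linarith) _
    have hS0 : 0 ≤ S := measureReal_nonneg
    have hB : 0 ≤ |M| * η ^ 2 * S := by positivity
    have := mul_le_mul_of_nonneg_left hintg hpow0
    nlinarith
end growth
end
end Part7

section Part8
open MeasureTheory Metric Filter Topology
noncomputable section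

section mollify
variable {n : ℕ}

/-- The bump used for mollification. -/
def bmp (n : ℕ) : ContDiffBump (0 : En n) := ⟨1/2, 1, by norm_num, by norm_num⟩
/-- The standard mollifier. -/
def eta (n : ℕ) : En n → ℝ := (bmp n).normed volume

lemma eta_smooth : ContDiff ℝ (⊤ : ℕ∞) (eta n) := (bmp n).contDiff_normed
lemma eta_integral : ∫ z, eta n z = 1 := (bmp n).integral_normed
lemma eta_compact : HasCompactSupport (eta n) := (bmp n).hasCompactSupport_normed
lemma eta_tsupport : tsupport (eta n) = closedBall 0 1 := (bmp n).tsupport_normed_eq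
lemma eta_zero {z : En n} (hz : z ∉ closedBall (0 : En n) 1) : eta n z = 0 := by
  rw [← eta_tsupport] at hz; exact image_eq_zero_of_notMem_tsupport hz

lemma pd_smooth {f : En n → ℝ} (hf : ContDiff ℝ (⊤ : ℕ∞) f) (i : Fin n) : ContDiff ℝ (⊤ : ℕ∞) (pd i f) :=
  (hf.fderiv_right (m := (⊤ : ℕ∞)) (by simp)).clm_apply contDiff_const
lemma pd_cont {f : En n → ℝ} (hf : ContDiff ℝ 1 f) (i : Fin n) : Continuous (pd i f) :=
  (hf.continuous_fderiv (by norm_num)).clm_apply continuous_const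
lemma pd_compact {f : En n → ℝ} (hf : HasCompactSupport f) (i : Fin n) : HasCompactSupport (pd i f) :=
  hf.fderiv_apply (𝕜 := ℝ) _
lemma eta_C1 : ContDiff ℝ 1 (eta n) := eta_smooth.of_le (by simp)
lemma deta_zero {z : En n} (hz : z ∉ closedBall (0 : En n) 1) (i : Fin n) : pd i (eta n) z = 0 := by
  have : z ∉ tsupport (pd i (eta n)) := fun h => hz (by
    rw [← eta_tsupport]; exact tsupport_fderiv_apply_subset ℝ _ h)
  exact image_eq_zero_of_notMem_tsupport this

lemma eta_moment (i k : Fin n) : ∫ z, z k * pd i (eta n) z = - if i = k then 1 else 0 := by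
  have hk : Continuous (fun z : En n => z k) := by fun_prop
  have h := integral_mul_fderiv_eq_neg_fderiv_mul_of_integrable (μ := (volume : Measure (En n))) (f := fun z : En n => z k) (g := eta n) (v := EuclideanSpace.single i 1)
    (by
      change Integrable (fun z => pd i (fun z : En n => z k) z * eta n z)
      simp only [pd_coord]
      exact (eta_C1.continuous.integrable_of_hasCompactSupport eta_compact).const_mul _)
    (by
      exact (hk.mul (pd_cont eta_C1 i)).integrable_of_hasCompactSupport ((pd_compact eta_compact i).mul_left))
    ((hk.mul eta_C1.continuous).integrable_of_hasCompactSupport (eta_compact.mul_left))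
    (fun x _ => diffAt_coord k x) (fun x _ => eta_C1.contDiffAt.differentiableAt (by norm_num))
  change ∫ z, z k * pd i (eta n) z = - ∫ z, pd i (fun z : En n => z k) z * eta n z at h
  rw [h]
  simp only [pd_coord]
  rw [integral_const_mul, eta_integral, mul_one]

lemma joint_cont {κ : En n → ℝ} (hκ : Continuous κ) (h0 : ∀ z, z ∉ closedBall (0 : En n) 1 → κ z = 0)
    {F : ℝ × En n → En n → ℝ} (hF : Continuous F.uncurry) : Continuous (fun p => ∫ z, κ z * F p z) := by
  have : (fun p => ∫ z, κ z * F p z) = fun p => ∫ z in closedBall (0 : En n) 1, κ z * F p z := by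
    funext p
    rw [setIntegral_eq_integral_of_forall_compl_eq_zero]
    intro z hz; rw [h0 z hz, zero_mul]
  rw [this]
  refine continuous_parametric_integral_of_continuous (f := fun p z => κ z * F p z) ?_ (isCompact_closedBall _ _)
  exact (hκ.comp continuous_snd).mul hF

/-- The mollification. -/
def mol (h : En n → ℝ) (p : ℝ × En n) : ℝ := ∫ z, eta n z * h (p.2 - p.1 • z)

lemma mol_cont {h : En n → ℝ} (hh : Continuous h) : Continuous (mol h) := by
  refine joint_cont eta_C1.continuous (fun z hz => eta_zero hz) (F := fun p z => h (p.2 - p.1 • z)) ?_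
  exact hh.comp (by fun_prop)

lemma mol_zero (h : En n → ℝ) (x : En n) : mol h (0, x) = h x := by
  unfold mol; simp [integral_mul_const, eta_integral]

/-- Averaged difference quotient. -/
def dq (a : En n → ℝ) (p : ℝ × En n) (z : En n) : ℝ := ∫ t in (0:ℝ)..1, fderiv ℝ a (p.2 - (t * p.1) • z) z

lemma dq_cont {a : En n → ℝ} (ha : ContDiff ℝ 1 a) : Continuous (Function.uncurry (dq a)) := by
  have : Function.uncurry (dq a) = fun p : (ℝ × En n) × En n => ∫ t in (0:ℝ)..1, fderiv ℝ a (p.1.2 - (t * p.1.1) • p.2) p.2 := rfl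
  rw [this]
  refine intervalIntegral.continuous_parametric_intervalIntegral_of_continuous' ?_ 0 1
  exact ((ha.continuous_fderiv (by norm_num)).comp (by fun_prop)).clm_apply (by fun_prop)

lemma dq_zero (a : En n → ℝ) (x z : En n) : dq a (0, x) z = fderiv ℝ a x z := by
  unfold dq; simp

lemma dq_eq {a : En n → ℝ} (ha : ContDiff ℝ 1 a) (ε : ℝ) (x z : En n) : a x - a (x - ε • z) = ε * dq a (ε, x) z := by
  have hd : ∀ t ∈ Set.uIcc (0:ℝ) 1, HasDerivAt (fun t : ℝ => a (x - (t * ε) • z)) (-(ε * fderiv ℝ a (x - (t * ε) • z) z)) t := by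
    intro t _
    have h1 : HasDerivAt (fun t : ℝ => x - (t * ε) • z) (-(ε • z)) t := by
      have : HasDerivAt (fun t : ℝ => (t * ε) • z) (ε • z) t := by
        have := ((hasDerivAt_id t).mul_const ε).smul_const z
        simpa using this
      simpa using this.const_sub x
    have h2 : HasFDerivAt a (fderiv ℝ a (x - (t * ε) • z)) (x - (t * ε) • z) := (ha.contDiffAt.differentiableAt (by norm_num)).hasFDerivAt
    have h3 : HasDerivAt (fun t : ℝ => a (x - (t * ε) • z)) (fderiv ℝ a (x - (t * ε) • z) (-(ε • z))) t :=
      h2.comp_hasDerivAt t h1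
    refine h3.congr_deriv ?_
    rw [map_neg, map_smul, smul_eq_mul]
  have hc : Continuous (fun t : ℝ => -(ε * fderiv ℝ a (x - (t * ε) • z) z)) := by
    have : Continuous (fun t : ℝ => fderiv ℝ a (x - (t * ε) • z) z) :=
      ((ha.continuous_fderiv (by norm_num)).comp (by fun_prop)).clm_apply (by fun_prop)
    fun_prop
  have := intervalIntegral.integral_eq_sub_of_hasDerivAt hd (hc.intervalIntegrable _ _)
  rw [intervalIntegral.integral_neg, intervalIntegral.integral_const_mul] at this
  unfold dq
  simp at this
  linarith

/-- Friedrichs commutator. -/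
def Fr (a h : En n → ℝ) (i : Fin n) (p : ℝ × En n) : ℝ :=
  pd i a p.2 * mol h p + ∫ z, pd i (eta n) z * (dq a p z * h (p.2 - p.1 • z))

lemma Fr_cont {a h : En n → ℝ} (ha : ContDiff ℝ 1 a) (hh : Continuous h) (i : Fin n) : Continuous (Fr a h i) := by
  refine (((pd_cont ha i).comp continuous_snd).mul (mol_cont hh)).add ?_
  refine joint_cont (pd_cont eta_C1 i) (fun z hz => deta_zero hz i) (F := fun p z => dq a p z * h (p.2 - p.1 • z)) ?_
  exact (dq_cont ha).mul (hh.comp (by fun_prop))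

lemma Fr_zero (a h : En n → ℝ) (i : Fin n) (x : En n) : Fr a h i (0, x) = 0 := by
  unfold Fr
  rw [mol_zero]
  simp only [dq_zero, zero_smul, sub_zero]
  have : ∀ z, pd i (eta n) z * (fderiv ℝ a x z * h x) = ∑ k, (pd k a x * h x) * (z k * pd i (eta n) z) := by
    intro z
    rw [fderiv_eq_sum_pd, Finset.sum_mul, Finset.mul_sum]
    exact Finset.sum_congr rfl fun k _ => by ring
  simp only [this]
  rw [integral_finsetSum]
  · simp only [integral_const_mul, eta_moment]
    simp
  · intro k _
    have hk : Continuous (fun z : En n => z k) := by fun_prop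
    exact ((hk.mul (pd_cont eta_C1 i)).integrable_of_hasCompactSupport ((pd_compact eta_compact i).mul_left)).const_mul _

lemma unif_small {F : ℝ × En n → ℝ} (hF : Continuous F) {K : Set (En n)} (hK : IsCompact K) (h0 : ∀ x ∈ K, F (0, x) = 0) {η : ℝ} (hη : 0 < η) :
    ∀ᶠ ε in 𝓝 (0:ℝ), ∀ x ∈ K, |F (ε, x)| ≤ η := by
  refine hK.eventually_forall_of_forall_eventually (P := fun ε x => |F (ε, x)| ≤ η) fun x hx => ?_
  have h1 : |F (0, x)| < η := by rw [h0 x hx]; simpa using hη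
  have := (hF.abs.tendsto (0, x)).eventually (Iio_mem_nhds h1)
  filter_upwards [this] with z hz using le_of_lt hz

/-- convolution. -/
def cv (k G : En n → ℝ) (x : En n) : ℝ := ∫ t, G t * k (x - t)

lemma cv_eq_conv (k G : En n → ℝ) : cv k G = convolution G k (ContinuousLinearMap.mul ℝ ℝ) volume := rfl

lemma cv_comm (k G : En n → ℝ) : cv k G = cv G k := by
  funext x
  unfold cv
  rw [← integral_sub_left_eq_self (fun t => G t * k (x - t)) volume x]
  simp [mul_comm]

lemma cv_smooth {k G : En n → ℝ} (hk : ContDiff ℝ (⊤ : ℕ∞) k) (hkc : HasCompactSupport k) (hG : Continuous G) : ContDiff ℝ (⊤ : ℕ∞) (cv k G) := by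
  rw [cv_eq_conv]
  exact hkc.contDiff_convolution_right _ hG.locallyIntegrable hk

lemma pd_cv {k G : En n → ℝ} (hk : ContDiff ℝ 1 k) (hkc : HasCompactSupport k) (hG : Continuous G) (i : Fin n) : pd i (cv k G) = cv (pd i k) G := by
  funext x
  have h := hkc.hasFDerivAt_convolution_right (ContinuousLinearMap.mul ℝ ℝ) (hG.locallyIntegrable (μ := volume)) hk x
  rw [← cv_eq_conv] at h
  unfold pd
  rw [h.fderiv, convolution_precompR_apply _ hG.locallyIntegrable (hkc.fderiv (𝕜 := ℝ)) (hk.continuous_fderiv (by norm_num))]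
  rfl

lemma pd_cv' {k G : En n → ℝ} (hk : Continuous k) (hG : ContDiff ℝ 1 G) (hGc : HasCompactSupport G) (i : Fin n) : pd i (cv k G) = cv k (pd i G) := by
  rw [cv_comm, pd_cv hG hGc hk, cv_comm]

/-- scaled kernel -/
def sc (ε : ℝ) (κ : En n → ℝ) (t : En n) : ℝ := (ε ^ n)⁻¹ * κ (ε⁻¹ • t)

lemma cv_sc {ε : ℝ} (hε : 0 < ε) (κ G : En n → ℝ) (x : En n) : cv (sc ε κ) G x = ∫ z, κ z * G (x - ε • z) := by
  rw [cv_comm]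
  unfold cv sc
  have := Measure.integral_comp_inv_smul (volume : Measure (En n)) (fun z => κ z * G (x - ε • z)) ε
  simp only [smul_smul, mul_inv_cancel₀ hε.ne', one_smul, finrank_euclideanSpace, Fintype.card_fin] at this
  simp only [mul_assoc]
  rw [integral_const_mul, this, abs_of_pos (by positivity), smul_eq_mul, ← mul_assoc, inv_mul_cancel₀ (by positivity), one_mul]

lemma sc_smooth (ε : ℝ) {κ : En n → ℝ} (hκ : ContDiff ℝ (⊤ : ℕ∞) κ) : ContDiff ℝ (⊤ : ℕ∞) (sc ε κ) :=
  contDiff_const.mul (hκ.comp (contDiff_const_smul _))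

lemma sc_compact {ε : ℝ} (hε : 0 < ε) {κ : En n → ℝ} (hκ : HasCompactSupport κ) : HasCompactSupport (sc ε κ) :=
  (hκ.comp_smul (inv_pos.2 hε).ne').mul_left

lemma pd_sc (ε : ℝ) {κ : En n → ℝ} (hκ : ContDiff ℝ 1 κ) (i : Fin n) : pd i (sc ε κ) = fun t => ε⁻¹ * sc ε (pd i κ) t := by
  funext t
  have hd : Differentiable ℝ κ := hκ.differentiable (by norm_num)
  have hd2 : DifferentiableAt ℝ (fun t : En n => κ (ε⁻¹ • t)) t := (hd _).comp t (by fun_prop)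
  unfold sc
  rw [pd_const_mul i _ hd2, pd_comp_smul i κ _ _ (hd _)]
  ring

lemma cv_pd_sc {ε : ℝ} (hε : 0 < ε) (G : En n → ℝ) (i : Fin n) (x : En n) :
    cv (pd i (sc ε (eta n))) G x = ε⁻¹ * ∫ z, pd i (eta n) z * G (x - ε • z) := by
  rw [← cv_sc hε, pd_sc ε eta_C1]
  unfold cv
  rw [← integral_const_mul]
  congr 1; funext t; ring

lemma Fr_eq {a h : En n → ℝ} (ha : ContDiff ℝ 1 a) (hh : Continuous h) (i : Fin n) {ε : ℝ} (hε : 0 < ε) (x : En n) :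
    Fr a h i (ε, x) = pd i a x * cv (sc ε (eta n)) h x + a x * cv (pd i (sc ε (eta n))) h x - cv (pd i (sc ε (eta n))) (fun y => a y * h y) x := by
  rw [cv_sc hε, cv_pd_sc hε, cv_pd_sc hε]
  unfold Fr mol
  simp only
  rw [add_sub_assoc]
  congr 1
  have hintg : ∀ {F : En n → ℝ}, Continuous F → Integrable (fun z => pd i (eta n) z * F z) := fun hF =>
    ((pd_cont eta_C1 i).mul hF).integrable_of_hasCompactSupport (pd_compact eta_compact i).mul_right
  have c1 : Continuous (fun z : En n => h (x - ε • z)) := hh.comp (by fun_prop)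
  have c2 : Continuous (fun z : En n => a (x - ε • z)) := ha.continuous.comp (by fun_prop)
  have i2 : Integrable (fun z => pd i (eta n) z * (a (x - ε • z) * h (x - ε • z))) := hintg (c2.mul c1)
  rw [← mul_assoc, ← mul_comm ε⁻¹, mul_assoc, ← mul_sub, ← integral_const_mul, ← integral_sub ((hintg c1).const_mul _) i2, ← integral_const_mul]
  congr 1; funext z
  have := dq_eq ha ε x z
  rw [show dq a (ε, x) z = ε⁻¹ * (a x - a (x - ε • z)) by rw [this]; field_simp]
  ring
end mollify
end
end Part8

section Part9
open MeasureTheory Metric Filter Topology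
noncomputable section

section approx
variable {n : ℕ}

/-- An open annulus. -/
def ann (n : ℕ) (a b : ℝ) : Set (En n) := {x | a < ‖x‖ ∧ ‖x‖ < b}

lemma ann_open (a b : ℝ) : IsOpen (ann n a b) :=
  (isOpen_lt continuous_const continuous_norm).inter (isOpen_lt continuous_norm continuous_const)

lemma exists_cutoff {a b : ℝ} (ha : 1 < a) : ∃ χ : En n → ℝ, ContDiff ℝ (⊤ : ℕ∞) χ ∧ HasCompactSupport χ ∧
    tsupport χ ⊆ OmegaExt n ∧ ∀ x ∈ ann n a b, χ x = 1 := by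
  have hcl : IsClosed {x : En n | a ≤ ‖x‖ ∧ ‖x‖ ≤ b} :=
    (isClosed_le continuous_const continuous_norm).inter (isClosed_le continuous_norm continuous_const)
  obtain ⟨χ, h1, _, h3, h4⟩ := exists_contMDiff_support_eq_eq_one_iff (modelWithCornersSelf ℝ (En n)) (n := (⊤ : ℕ∞))
    (ann_open (n := n) ((1 + a) / 2) (b + 1)) hcl
    (by rintro x ⟨hx1, hx2⟩; exact ⟨by linarith, by linarith⟩)
  have hcl2 : IsClosed {x : En n | (1 + a) / 2 ≤ ‖x‖ ∧ ‖x‖ ≤ b + 1} :=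
    (isClosed_le continuous_const continuous_norm).inter (isClosed_le continuous_norm continuous_const)
  have hts : tsupport χ ⊆ {x : En n | (1 + a) / 2 ≤ ‖x‖ ∧ ‖x‖ ≤ b + 1} := by
    refine closure_minimal ?_ hcl2
    rw [h3]; rintro x ⟨hx1, hx2⟩; exact ⟨hx1.le, hx2.le⟩
  refine ⟨χ, contMDiff_iff_contDiff.1 h1, ?_, ?_, ?_⟩
  · refine HasCompactSupport.of_support_subset_isCompact (isCompact_closedBall (0 : En n) (b + 1)) ?_
    intro x hx
    have := hts (subset_tsupport _ hx)
    simpa using this.2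
  · intro x hx
    have := (hts hx).1
    change 1 < ‖x‖
    linarith
  · rintro x ⟨hx1, hx2⟩
    exact (h4 x).1 ⟨hx1.le, hx2.le⟩

lemma cut_C1 {χ f : En n → ℝ} (h1 : ContDiff ℝ (⊤ : ℕ∞) χ) (h2 : tsupport χ ⊆ OmegaExt n) (hf : ContDiffOn ℝ 1 f (OmegaExt n)) :
    ContDiff ℝ 1 (fun x => χ x * f x) := by
  rw [contDiff_iff_contDiffAt]
  intro x
  by_cases hx : x ∈ OmegaExt n
  · exact (h1.of_le (by simp)).contDiffAt.mul (hf.contDiffAt ((isOpen_Omega n).mem_nhds hx))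
  · have hx' : x ∉ tsupport χ := fun h => hx (h2 h)
    have : (fun x => χ x * f x) =ᶠ[𝓝 x] fun _ => 0 := by
      filter_upwards [notMem_tsupport_iff_eventuallyEq.1 hx'] with y hy
      rw [hy]; simp
    exact contDiffAt_const.congr_of_eventuallyEq this

lemma sc_zero {ε : ℝ} (hε : 0 < ε) {t : En n} (ht : ε < ‖t‖) : sc ε (eta n) t = 0 := by
  unfold sc
  rw [eta_zero, mul_zero]
  rw [mem_closedBall_zero_iff, norm_smul, Real.norm_eq_abs, abs_of_pos (inv_pos.2 hε), not_le, ← div_eq_inv_mul, lt_div_iff₀ hε]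
  linarith

lemma pd_sc_zero {ε : ℝ} (hε : 0 < ε) {t : En n} (ht : ε < ‖t‖) (i : Fin n) : pd i (sc ε (eta n)) t = 0 := by
  rw [pd_sc ε eta_C1]
  simp only
  unfold sc
  rw [deta_zero, mul_zero, mul_zero]
  rw [mem_closedBall_zero_iff, norm_smul, Real.norm_eq_abs, abs_of_pos (inv_pos.2 hε), not_le, ← div_eq_inv_mul, lt_div_iff₀ hε]
  linarith

lemma pd_reflect {k : En n → ℝ} (hk : ContDiff ℝ 1 k) (x y : En n) (i : Fin n) :
    pd i (fun y => k (x - y)) y = - pd i k (x - y) := by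
  unfold pd
  have h2 : HasFDerivAt k (fderiv ℝ k (x - y)) (x - y) := (hk.contDiffAt.differentiableAt (by norm_num)).hasFDerivAt
  have h1 : HasFDerivAt (fun y : En n => x - y) (-(ContinuousLinearMap.id ℝ (En n))) y := (hasFDerivAt_id y).const_sub x
  have h3 : HasFDerivAt (fun y => k (x - y)) ((fderiv ℝ k (x - y)).comp (-(ContinuousLinearMap.id ℝ (En n)))) y := h2.comp y h1
  rw [h3.fderiv]
  simp

lemma weak_cv {A : En n → Matrix (Fin n) (Fin n) ℝ} {u : En n → ℝ} (hu : WeakSol A u) {U : Set (En n)} (hU : IsOpen U) (hUO : U ⊆ OmegaExt n)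
    {g : En n → ℝ} (hg : ContDiff ℝ 1 g) (hgu : ∀ y ∈ U, g y = u y) {a : Fin n → Fin n → En n → ℝ}
    (ha : ∀ i j, ContDiff ℝ 1 (a i j)) (haA : ∀ i j, ∀ y ∈ U, a i j y = A y i j) {ε : ℝ} (hε : 0 < ε) {x : En n}
    (hx : closedBall x ε ⊆ U) :
    -(∑ i, ∑ j, cv (pd i (sc ε (eta n))) (fun y => a i j y * pd j g y) x) = cv (sc ε (eta n)) g x := by
  set k := sc ε (eta n) with hk
  have hks : ContDiff ℝ (⊤ : ℕ∞) k := sc_smooth ε eta_smooth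
  have hk1 : ContDiff ℝ 1 k := hks.of_le (by simp)
  have hk0 : ∀ y, y ∉ closedBall x ε → k (x - y) = 0 := fun y hy => sc_zero hε (by
    rw [mem_closedBall, not_le, dist_comm, dist_eq_norm] at hy; exact hy)
  have hpk0 : ∀ i y, y ∉ closedBall x ε → pd i k (x - y) = 0 := fun i y hy => pd_sc_zero hε (by
    rw [mem_closedBall, not_le, dist_comm, dist_eq_norm] at hy; exact hy) i
  have hsup : Function.support (fun y => k (x - y)) ⊆ closedBall x ε := fun y hy => by
    by_contra h; exact hy (hk0 y h)
  have h := hu.2 (fun y => k (x - y)) (hks.comp (contDiff_const.sub contDiff_id))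
    (HasCompactSupport.of_support_subset_isCompact (isCompact_closedBall x ε) hsup)
    ((closure_minimal hsup isClosed_closedBall).trans (hx.trans hUO))
  have hm : MeasurableSet (OmegaExt n) := (isOpen_Omega n).measurableSet
  have e1 : ∀ y, y ∈ U → ∀ j, pd j g y = pd j u y := fun y hy j => pd_congr (by
    filter_upwards [hU.mem_nhds hy] with z hz using hgu z hz) j
  have L : (∫ y in OmegaExt n, ∑ i, (A y).mulVec (fun j => gradient u y j) i * gradient (fun y => k (x - y)) y i)
      = ∫ y, ∑ i, ∑ j, -((a i j y * pd j g y) * pd i k (x - y)) := by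
    refine Eq.trans (setIntegral_congr_fun hm fun y hy => ?_) (setIntegral_eq_integral_of_forall_compl_eq_zero (s := OmegaExt n) ?_)
    · beta_reduce
      simp only [gradient_coord, pd_reflect hk1]
      refine Finset.sum_congr rfl fun i _ => ?_
      by_cases hyU : y ∈ closedBall x ε
      · simp only [Matrix.mulVec, dotProduct]
        rw [Finset.sum_mul]
        refine Finset.sum_congr rfl fun j _ => ?_
        rw [e1 y (hx hyU), haA i j y (hx hyU)]; ring
      · simp [hpk0 i y hyU]
    · intro y hy
      refine Finset.sum_eq_zero fun i _ => Finset.sum_eq_zero fun j _ => ?_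
      rw [hpk0 i y (fun h => hy (hUO (hx h)))]; simp
  have Rr : (∫ y in OmegaExt n, u y * k (x - y)) = ∫ y, g y * k (x - y) := by
    refine Eq.trans (setIntegral_congr_fun hm fun y hy => ?_) (setIntegral_eq_integral_of_forall_compl_eq_zero (s := OmegaExt n) ?_)
    · beta_reduce
      by_cases hyU : y ∈ closedBall x ε
      · simp only [hgu y (hx hyU)]
      · simp [hk0 y hyU]
    · intro y hy
      rw [hk0 y (fun h => hy (hUO (hx h)))]; simp
  rw [L, Rr] at h
  unfold cv
  rw [← h, integral_finsetSum]
  · rw [← Finset.sum_neg_distrib]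
    refine Finset.sum_congr rfl fun i _ => ?_
    rw [integral_finsetSum]
    · rw [← Finset.sum_neg_distrib]
      refine Finset.sum_congr rfl fun j _ => ?_
      rw [integral_neg]
    · intro j _
      refine Continuous.integrable_of_hasCompactSupport ?_ ?_
      · exact (((ha i j).continuous.mul (pd_cont hg j)).mul ((pd_cont hk1 i).comp (by fun_prop))).neg
      · refine HasCompactSupport.of_support_subset_isCompact (isCompact_closedBall x ε) fun y hy => ?_
        by_contra h'; exact hy (by simp [hpk0 i y h'])
  · intro i _
    refine Continuous.integrable_of_hasCompactSupport ?_ ?_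
    · exact continuous_finsetSum _ fun j _ => (((ha i j).continuous.mul (pd_cont hg j)).mul ((pd_cont hk1 i).comp (by fun_prop))).neg
    · refine HasCompactSupport.of_support_subset_isCompact (isCompact_closedBall x ε) fun y hy => ?_
      by_contra h'; exact hy (by simp [hpk0 i y h'])

lemma approx_exists {A : En n → Matrix (Fin n) (Fin n) ℝ} {lam α C : ℝ} (hA : EllipticDecay A lam α C) {u : En n → ℝ} (hu : WeakSol A u)
    {ρ₁ ρ₂ : ℝ} (h1 : 1 < ρ₁) {η : ℝ} (hη : 0 < η) :
    ∃ v : En n → ℝ, ContDiff ℝ 2 v ∧ ∀ x, ρ₁ ≤ ‖x‖ → ‖x‖ ≤ ρ₂ →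
      |v x - u x| ≤ η ∧ (∀ j, |pd j v x - pd j u x| ≤ η) ∧ |LA A v x + v x| ≤ η := by
  obtain ⟨χ, hχs, hχc, hχt, hχ1⟩ := exists_cutoff (n := n) (a := (1 + ρ₁) / 2) (b := ρ₂ + 1) (by linarith)
  set U := ann n ((1 + ρ₁) / 2) (ρ₂ + 1) with hU
  have hUo : IsOpen U := ann_open _ _
  have hUO : U ⊆ OmegaExt n := fun x hx => by
    have := hx.1; change 1 < ‖x‖; linarith
  set g : En n → ℝ := fun x => χ x * u x with hgdef
  have hg : ContDiff ℝ 1 g := cut_C1 hχs hχt hu.1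
  have hgc : HasCompactSupport g := hχc.mul_right
  have hgu : ∀ y ∈ U, g y = u y := fun y hy => by rw [hgdef]; simp only [hχ1 y hy, one_mul]
  set a : Fin n → Fin n → En n → ℝ := fun i j x => χ x * A x i j with hadef
  have ha : ∀ i j, ContDiff ℝ 1 (a i j) := fun i j => cut_C1 hχs hχt (hA.2.1 i j)
  have haA : ∀ i j, ∀ y ∈ U, a i j y = A y i j := fun i j y hy => by rw [hadef]; simp only [hχ1 y hy, one_mul]
  set K : Set (En n) := {x | ρ₁ ≤ ‖x‖ ∧ ‖x‖ ≤ ρ₂} with hKdef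
  have hK : IsCompact K := by
    refine (isCompact_closedBall (0 : En n) ρ₂).of_isClosed_subset
      ((isClosed_le continuous_const continuous_norm).inter (isClosed_le continuous_norm continuous_const)) ?_
    intro x hx; simpa using hx.2
  have hKU : K ⊆ U := fun x hx => ⟨by have := hx.1; linarith, by have := hx.2; linarith⟩
  have E1 := unif_small (F := fun p => mol g p - g p.2) ((mol_cont hg.continuous).sub (hg.continuous.comp continuous_snd)) hK
    (fun x _ => by simp [mol_zero]) hη
  have E2 : ∀ j, _ := fun j => unif_small (F := fun p => mol (pd j g) p - pd j g p.2)
    ((mol_cont (pd_cont hg j)).sub ((pd_cont hg j).comp continuous_snd)) hK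
    (fun x _ => by simp [mol_zero]) hη
  have E3 := unif_small (F := fun p => ∑ i, ∑ j, Fr (a i j) (pd j g) i p)
    (continuous_finsetSum _ fun i _ => continuous_finsetSum _ fun j _ => Fr_cont (ha i j) (pd_cont hg j) i) hK
    (fun x _ => by simp [Fr_zero]) hη
  have E4 : ∀ᶠ ε in 𝓝 (0:ℝ), ε < min ((ρ₁ - 1) / 2) 1 := Iio_mem_nhds (by
    rw [lt_min_iff]; constructor <;> linarith)
  have hev := (E1.and ((eventually_all.2 E2).and (E3.and E4)))
  obtain ⟨ε, ⟨e1, e2, e3, e4⟩, hε⟩ := ((hev.filter_mono nhdsWithin_le_nhds).and (self_mem_nhdsWithin (s := Set.Ioi (0:ℝ)) (a := 0))).exists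
  have hε : 0 < ε := hε
  set k := sc ε (eta n) with hk
  have hks : ContDiff ℝ (⊤ : ℕ∞) k := sc_smooth ε eta_smooth
  have hk1 : ContDiff ℝ 1 k := hks.of_le (by simp)
  have hkc : HasCompactSupport k := sc_compact hε eta_compact
  have hv : ContDiff ℝ 2 (cv k g) := (cv_smooth hks hkc hg.continuous).of_le (by
    exact WithTop.coe_le_coe.2 (le_top : (2 : ℕ∞) ≤ ⊤))
  have hpv : ∀ j, pd j (cv k g) = cv k (pd j g) := fun j => pd_cv' hk1.continuous hg hgc j
  refine ⟨cv k g, hv, fun x hx1 hx2 => ?_⟩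
  have hxK : x ∈ K := ⟨hx1, hx2⟩
  have hxU := hKU hxK
  have epd : ∀ {f f' : En n → ℝ}, (∀ y ∈ U, f y = f' y) → ∀ j, pd j f x = pd j f' x := fun {f f'} hff j => pd_congr (by
    filter_upwards [hUo.mem_nhds hxU] with z hz using hff z hz) j
  refine ⟨?_, fun j => ?_, ?_⟩
  · rw [← hgu x hxU, hk, cv_sc hε]; exact e1 x hxK
  · rw [← epd hgu, hpv, hk, cv_sc hε]; exact e2 j x hxK
  · have hball : closedBall x ε ⊆ U := fun y hy => by
      rw [mem_closedBall, dist_eq_norm] at hy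
      have t1 := norm_sub_norm_le x y
      have t2 := norm_sub_norm_le y x
      rw [norm_sub_rev] at t1
      have := lt_min_iff.1 e4
      exact ⟨by linarith, by linarith⟩
    have hw := weak_cv hu hUo hUO hg hgu ha haA hε hball
    have hLA : LA A (cv k g) x + cv k g x = ∑ i, ∑ j, Fr (a i j) (pd j g) i (ε, x) := by
      rw [← hw, ← Finset.sum_neg_distrib]
      unfold LA
      rw [← Finset.sum_add_distrib]
      refine Finset.sum_congr rfl fun i _ => ?_
      have hAd : ∀ j, DifferentiableAt ℝ (fun y => A y i j) x := fun j => A_diff hA (hUO hxU) i j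
      have hpd : ∀ j, DifferentiableAt ℝ (pd j (cv k g)) x := fun j => pd_diffAt hv.contDiffAt j
      rw [pd_sum i (fun j _ => (hAd j).fun_mul (hpd j)), ← Finset.sum_neg_distrib, ← Finset.sum_add_distrib]
      refine Finset.sum_congr rfl fun j _ => ?_
      rw [pd_mul i (hAd j) (hpd j), hpv, pd_cv hk1 hkc (pd_cont hg j), Fr_eq (ha i j) (pd_cont hg j) i hε, epd (haA i j), haA i j x hxU]
      ring
    rw [hLA]; exact e3 x hxK
end approx
end
end Part9

section Part10
open MeasureTheory Metric Filter Topology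
noncomputable section

section final
variable {n : ℕ} {A : En n → Matrix (Fin n) (Fin n) ℝ} {lam α C : ℝ}

/-- `‖x‖ ^ a * t` : the value of `w` in terms of `x` and `u`. -/
def Wq (a : ℝ) (q : En n × ℝ × (Fin n → ℝ)) : ℝ := ‖q.1‖ ^ a * q.2.1
/-- derivative of `w` in terms of `x`, `u`, `∇u`. -/
def Pq (a : ℝ) (q : En n × ℝ × (Fin n → ℝ)) (j : Fin n) : ℝ :=
  ‖q.1‖ ^ a * q.2.2 j + a * (‖q.1‖ ^ (a - 2) * (q.1 j * q.2.1))
/-- the integrand as an explicit function. -/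
def Fg (A : En n → Matrix (Fin n) (Fin n) ℝ) (c a : ℝ) (q : En n × ℝ × (Fin n → ℝ)) : ℝ :=
  2 * (((∑ k, ZZ A k q.1 * Pq a q k) / ‖q.1‖) ^ 2 * muA A q.1) - (∑ k, ∑ l, A q.1 k l * (Pq a q k * Pq a q l)) + Wq a q ^ 2
    - c * (Wq a q ^ 2 / ‖q.1‖ ^ 2 * muA A q.1)

lemma gI_Fg (c a : ℝ) {v : En n → ℝ} {x : En n} (hx : x ∈ OmegaExt n) (hv : DifferentiableAt ℝ v x) :
    gI A c (wv a v) x = Fg A c a (x, v x, fun j => pd j v x) := by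
  unfold gI Fg Pq Wq
  simp only [pd_wv a (Omega_ne hx) hv]
  rfl

lemma Fg_cont (hA : EllipticDecay A lam α C) (hlam : 0 < lam) (c a : ℝ) :
    ContinuousOn (Fg A c a) {q | q.1 ∈ OmegaExt n} := by
  have lift : ∀ {f : En n → ℝ}, ContinuousOn f (OmegaExt n) →
      ContinuousOn (fun q : En n × ℝ × (Fin n → ℝ) => f q.1) {q | q.1 ∈ OmegaExt n} := fun hf =>
    hf.comp continuousOn_fst fun q hq => hq
  have hne : ∀ q ∈ {q : En n × ℝ × (Fin n → ℝ) | q.1 ∈ OmegaExt n}, ‖q.1‖ ≠ 0 := fun q hq => norm_ne_zero_iff.2 (Omega_ne hq)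
  have hN : ContinuousOn (fun q : En n × ℝ × (Fin n → ℝ) => ‖q.1‖) {q | q.1 ∈ OmegaExt n} := by fun_prop
  have hNr : ∀ b : ℝ, ContinuousOn (fun q : En n × ℝ × (Fin n → ℝ) => ‖q.1‖ ^ b) {q | q.1 ∈ OmegaExt n} := fun b =>
    hN.rpow_const fun q hq => Or.inl (hne q hq)
  have hW : ContinuousOn (Wq a) {q : En n × ℝ × (Fin n → ℝ) | q.1 ∈ OmegaExt n} := (hNr a).mul (by fun_prop)
  have hP : ∀ j, ContinuousOn (fun q => Pq a q j) {q : En n × ℝ × (Fin n → ℝ) | q.1 ∈ OmegaExt n} := fun j =>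
    ((hNr a).mul (by fun_prop)).add (continuousOn_const.mul ((hNr (a - 2)).mul (by fun_prop)))
  have hmu := lift (mu_C1 hA).continuousOn
  have hZ : ∀ k, _ := fun k => lift (ZZ_C1 hA hlam k).continuousOn
  have hAk : ∀ k l, _ := fun k l => lift (hA.2.1 k l).continuousOn
  refine ((ContinuousOn.sub ?_ ?_).add (hW.pow 2)).sub ?_
  · exact continuousOn_const.mul ((((continuousOn_finsetSum _ fun k _ => (hZ k).mul (hP k)).div hN hne).pow 2).mul hmu)
  · exact continuousOn_finsetSum _ fun k _ => continuousOn_finsetSum _ fun l _ => (hAk k l).mul ((hP k).mul (hP l))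
  · exact continuousOn_const.mul (((hW.pow 2).div (hN.pow 2) fun q hq => pow_ne_zero 2 (hne q hq)).mul hmu)

lemma Gfun_tendsto (hn : 2 ≤ n) (hA : EllipticDecay A lam α C) (hlam : 0 < lam) {u : En n → ℝ} (hu : ContDiffOn ℝ 1 u (OmegaExt n))
    {v : ℕ → En n → ℝ} (hv : ∀ m, ContDiff ℝ 2 (v m)) {ρ : ℝ} (hρ : 1 < ρ) {e : ℕ → ℝ} (he : Tendsto e atTop (𝓝 0)) (he1 : ∀ m, e m ≤ 1)
    (h0 : ∀ m x, ‖x‖ = ρ → |v m x - u x| ≤ e m) (h1 : ∀ m x, ‖x‖ = ρ → ∀ j, |pd j (v m) x - pd j u x| ≤ e m) :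
    Tendsto (fun m => Gfun A (v m) ρ) atTop (𝓝 (Gfun A u ρ)) := by
  have hv1 : ∀ m, ContDiffOn ℝ 1 (v m) (OmegaExt n) := fun m => ((hv m).of_le (by norm_num)).contDiffOn
  rw [Gfun_eq hn hA hlam hu hρ]
  simp only [fun m => Gfun_eq hn hA hlam (hv1 m) hρ]
  refine Tendsto.const_mul _ ?_
  set c := ((n : ℝ) - 1) * ((n : ℝ) - 3) / 4
  set a := ((n:ℝ) - 1) / 2
  have := sig_finite n hn
  have hS : ∀ x : En n, ‖x‖ = ρ → x ∈ OmegaExt n := fun x hx => by change 1 < ‖x‖; linarith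
  have hSs : ∀ ω ∈ sphere (0 : En n) 1, ‖ρ • ω‖ = ρ := fun ω hω => by
    rw [norm_smul, mem_sphere_zero_iff_norm.1 hω, mul_one, Real.norm_eq_abs, abs_of_pos (by linarith)]
  have hsub : sphere (0 : En n) ρ ⊆ OmegaExt n := fun x hx => hS x (mem_sphere_zero_iff_norm.1 hx)
  obtain ⟨M0, hM0⟩ := (isCompact_sphere (0 : En n) ρ).exists_bound_of_continuousOn (hu.continuousOn.mono hsub)
  have hM1 : ∀ j : Fin n, ∃ M, ∀ x ∈ sphere (0 : En n) ρ, ‖pd j u x‖ ≤ M := fun j =>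
    (isCompact_sphere (0 : En n) ρ).exists_bound_of_continuousOn ((pd_continuousOn j (isOpen_Omega n) hu).mono hsub)
  choose M1 hM1 using hM1
  set Q : Set (En n × ℝ × (Fin n → ℝ)) := sphere (0 : En n) ρ ×ˢ (Set.Icc (-(M0 + 1)) (M0 + 1) ×ˢ Set.Icc (fun j => -(M1 j + 1)) (fun j => M1 j + 1)) with hQ
  have hQc : IsCompact Q := (isCompact_sphere _ _).prod (isCompact_Icc.prod isCompact_Icc)
  obtain ⟨B, hB⟩ := hQc.exists_bound_of_continuousOn ((Fg_cont hA hlam c a).mono (fun q hq => hsub hq.1))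
  have hdv : ∀ m x, DifferentiableAt ℝ (v m) x := fun m x => (hv m).contDiffAt.differentiableAt (by norm_num)
  have hdu : ∀ x ∈ OmegaExt n, DifferentiableAt ℝ u x := fun x hx =>
    (hu.contDiffAt ((isOpen_Omega n).mem_nhds hx)).differentiableAt (by norm_num)
  refine tendsto_integral_of_dominated_convergence (fun _ => B) ?_ (integrable_const B) ?_ ?_
  · intro m
    exact (sig_integrable hn (comp_sphere (gI_cont hA hlam c (wv_C a (hv1 m))) hρ)).aestronglyMeasurable
  · intro m
    filter_upwards [sig_ae n] with ω hω
    have hx := hSs ω hω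
    have hxs : ρ • ω ∈ sphere (0 : En n) ρ := mem_sphere_zero_iff_norm.2 hx
    rw [gI_Fg c a (hS _ hx) (hdv m _)]
    refine hB _ ⟨hxs, ?_, ?_, ?_⟩
    · have t1 := abs_le.1 (h0 m _ hx)
      have t2 := abs_le.1 (hM0 _ hxs)
      have t3 := he1 m
      constructor <;> linarith
    · intro j
      have t1 := abs_le.1 (h1 m _ hx j)
      have t2 := abs_le.1 (hM1 j _ hxs)
      have t3 := he1 m
      change -(M1 j + 1) ≤ pd j (v m) (ρ • ω)
      linarith
    · intro j
      have t1 := abs_le.1 (h1 m _ hx j)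
      have t2 := abs_le.1 (hM1 j _ hxs)
      have t3 := he1 m
      change pd j (v m) (ρ • ω) ≤ M1 j + 1
      linarith
  · filter_upwards [sig_ae n] with ω hω
    have hx := hSs ω hω
    rw [gI_Fg c a (hS _ hx) (hdu _ (hS _ hx))]
    simp only [fun m => gI_Fg (A := A) c a (hS _ hx) (hdv m _)]
    have hopen : IsOpen {q : En n × ℝ × (Fin n → ℝ) | q.1 ∈ OmegaExt n} := (isOpen_Omega n).preimage continuous_fst
    have hc := (Fg_cont hA hlam c a).continuousAt (x := (ρ • ω, u (ρ • ω), fun j => pd j u (ρ • ω))) (hopen.mem_nhds (hS _ hx))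
    have sq : ∀ {f : ℕ → ℝ} {l : ℝ}, (∀ m, |f m - l| ≤ e m) → Tendsto f atTop (𝓝 l) := fun {f l} hf => by
      rw [tendsto_iff_norm_sub_tendsto_zero]
      exact squeeze_zero (fun m => norm_nonneg _) hf he
    refine hc.tendsto.comp (tendsto_const_nhds.prodMk_nhds ((sq fun m => h0 m _ hx).prodMk_nhds ?_))
    rw [tendsto_pi_nhds]
    exact fun j => sq fun m => h1 m _ hx j
end final

theorem G_monotone'
    (n : ℕ) (hn : 2 ≤ n)
    (A : En n → Matrix (Fin n) (Fin n) ℝ) (lam α C : ℝ)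
    (hlam0 : 0 < lam) (hlam1 : lam < 1) (hα : 0 < α) (hC : 0 < C)
    (hA : EllipticDecay A lam α C)
    (u : En n → ℝ) (hu : WeakSol A u) :
    ∀ δ ∈ Set.Ioo (0 : ℝ) 1, ∃ R₁ > (1 : ℝ),
      MonotoneOn (fun ρ => Gfun A u ρ / ρ ^ ((n : ℝ) - 1 - δ)) (Set.Ici R₁) := by
  rintro δ ⟨hδ0, hδ1⟩
  obtain ⟨R, hR, hH⟩ := H_lower hn hA hlam0 hα δ hδ0 hδ1
  refine ⟨R, hR, fun ρ₁ h₁ ρ₂ _ h₁₂ => ?_⟩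
  have h₁ : R ≤ ρ₁ := h₁
  obtain ⟨K, hK⟩ := hH ρ₁ ρ₂ h₁ h₁₂
  have hpos : ∀ m : ℕ, (0:ℝ) < 1 / ((m:ℝ) + 1) := fun m => by positivity
  choose v hv hvx using fun m : ℕ => approx_exists hA hu (ρ₁ := ρ₁) (ρ₂ := ρ₂) (by linarith) (hpos m)
  have he : Tendsto (fun m : ℕ => 1 / ((m:ℝ) + 1)) atTop (𝓝 0) := tendsto_one_div_add_atTop_nhds_zero_nat
  have he1 : ∀ m : ℕ, 1 / ((m:ℝ) + 1) ≤ 1 := fun m => by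
    rw [div_le_one (by positivity)]
    have : (0:ℝ) ≤ m := by positivity
    linarith
  have T : ∀ ρ, ρ₁ ≤ ρ → ρ ≤ ρ₂ → Tendsto (fun m => Gfun A (v m) ρ) atTop (𝓝 (Gfun A u ρ)) := fun ρ ha hb =>
    Gfun_tendsto hn hA hlam0 hu.1 hv (by linarith) he he1
      (fun m x hx => (hvx m x (by linarith) (by linarith)).1)
      (fun m x hx => (hvx m x (by linarith) (by linarith)).2.1)
  have T1 : Tendsto (fun m : ℕ => Gfun A (v m) ρ₁ / ρ₁ ^ ((n:ℝ) - 1 - δ) - K * (1 / ((m:ℝ) + 1)) ^ 2) atTop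
      (𝓝 (Gfun A u ρ₁ / ρ₁ ^ ((n:ℝ) - 1 - δ) - K * 0 ^ 2)) :=
    ((T ρ₁ le_rfl h₁₂).div_const _).sub ((he.pow 2).const_mul K)
  have T2 := (T ρ₂ h₁₂ le_rfl).div_const (ρ₂ ^ ((n:ℝ) - 1 - δ))
  have := le_of_tendsto_of_tendsto' T1 T2 fun m => hK _ (v m) (hv m) fun x hx1 hx2 => (hvx m x hx1 hx2).2.2
  simpa using this
end
end Part10

/-- **Theorem `mong2`.** Let `u` be a weak solution of `-div(A∇u) = u`
in `Ω`. For every `δ ∈ (0,1)` there exists `R₁ > 1` such that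
`ρ ↦ G(ρ)/ρ^{n-1-δ}` is non-decreasing on `[R₁, ∞)`. -/
theorem G_monotone
    (n : ℕ) (hn : 2 ≤ n)
    (A : En n → Matrix (Fin n) (Fin n) ℝ) (lam α C : ℝ)
    (hlam0 : 0 < lam) (hlam1 : lam < 1) (hα : 0 < α) (hC : 0 < C)
    (hA : EllipticDecay A lam α C)
    (u : En n → ℝ) (hu : WeakSol A u) :
    ∀ δ ∈ Set.Ioo (0 : ℝ) 1, ∃ R₁ > (1 : ℝ),
      MonotoneOn (fun ρ => Gfun A u ρ / ρ ^ ((n : ℝ) - 1 - δ)) (Set.Ici R₁) := by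
  exact G_monotone' n hn A lam α C hlam0 hlam1 hα hC hA u hu

end
end

section
/- Let u be a differentiable function on Ω, let h : (1, ∞) → ℝ be differentiable, and set v(x) = h(|x|) u(x). Then for every x ∈ Ω one has the pointwise identity (Zv(x)/r(x))² μ(x) − ⟨A(x)∇v(x), ∇v(x)⟩ = h(|x|)² [ (Zu(x)/r(x))² μ(x) − ⟨A(x)∇u(x), ∇u(x)⟩ ]. In particular, taking u ≡ 1, every radial function v(x) = h(|x|) satisfies (Zv/r)² μ = ⟨A∇v, ∇v⟩ on Ω. -/
open MeasureTheory Metric Filter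

noncomputable section

lemma quadForm_add_left {n : ℕ} (M : Matrix (Fin n) (Fin n) ℝ) (ξ ζ η : En n) (a b : ℝ) :
    quadForm M (a • ξ + b • ζ) η = a * quadForm M ξ η + b * quadForm M ζ η := by
  have e : (fun j => (a • ξ + b • ζ) j) = a • (fun j => ξ j) + b • (fun j => ζ j) := by
    ext j; simp
  unfold quadForm
  rw [e, Matrix.mulVec_add, Matrix.mulVec_smul, Matrix.mulVec_smul, Finset.mul_sum,
    Finset.mul_sum, ← Finset.sum_add_distrib]
  refine Finset.sum_congr rfl fun i _ => ?_
  simp only [Pi.add_apply, Pi.smul_apply, smul_eq_mul]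
  ring

lemma quadForm_symm {n : ℕ} (M : Matrix (Fin n) (Fin n) ℝ) (hM : M.IsSymm) (ξ η : En n) :
    quadForm M ξ η = quadForm M η ξ := by
  simp only [quadForm, Matrix.mulVec, dotProduct, Finset.sum_mul]
  rw [Finset.sum_comm]
  refine Finset.sum_congr rfl fun i _ => Finset.sum_congr rfl fun j _ => ?_
  rw [hM.apply i j]
  ring

lemma Zd_eq {n : ℕ} (A : En n → Matrix (Fin n) (Fin n) ℝ) (f : En n → ℝ) (x : En n) :
    Zd A f x = (muA A x)⁻¹ * quadForm (A x) x (gradient f x) := by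
  simp only [Zd, Zvec, quadForm, Finset.mul_sum]
  refine Finset.sum_congr rfl fun i _ => ?_
  simp [mul_assoc]

lemma key_identity {n : ℕ} (A : En n → Matrix (Fin n) (Fin n) ℝ) (x : En n)
    (hx : ‖x‖ ≠ 0) (hM : (A x).IsSymm) (hq : quadForm (A x) x x ≠ 0)
    (f g : En n → ℝ) (a b : ℝ) (hfg : gradient f x = a • gradient g x + b • x) :
    (Zd A f x / ‖x‖) ^ 2 * muA A x - quadForm (A x) (gradient f x) (gradient f x)
      = a ^ 2 * ((Zd A g x / ‖x‖) ^ 2 * muA A x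
          - quadForm (A x) (gradient g x) (gradient g x)) := by
  have h1 : quadForm (A x) x (gradient f x)
      = a * quadForm (A x) x (gradient g x) + b * quadForm (A x) x x := by
    rw [quadForm_symm _ hM, hfg, quadForm_add_left, quadForm_symm _ hM (gradient g x)]
  have h2 : quadForm (A x) (gradient g x) (gradient f x)
      = a * quadForm (A x) (gradient g x) (gradient g x)
        + b * quadForm (A x) x (gradient g x) := by
    rw [quadForm_symm _ hM, hfg, quadForm_add_left]
  have h3 : quadForm (A x) (gradient f x) (gradient f x)
      = a * quadForm (A x) (gradient g x) (gradient f x)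
        + b * quadForm (A x) x (gradient f x) := by
    conv_lhs => rw [show quadForm (A x) (gradient f x) (gradient f x)
      = quadForm (A x) (a • gradient g x + b • x) (gradient f x) by rw [← hfg]]
    rw [quadForm_add_left]
  rw [h3, Zd_eq, Zd_eq, h2, h1]
  simp only [muA]
  field_simp
  ring

lemma hasGradientAt_radial {n : ℕ} (h : ℝ → ℝ) (x : En n) (hx : x ≠ 0)
    (hd : DifferentiableAt ℝ h ‖x‖) :
    HasGradientAt (fun y : En n => h ‖y‖) ((deriv h ‖x‖ / ‖x‖) • x) x := by
  have hx' : ‖x‖ ≠ 0 := norm_ne_zero_iff.mpr hx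
  have hs : HasFDerivAt (fun y : En n => ‖y‖ ^ 2) (2 • innerSL ℝ x) x :=
    (hasStrictFDerivAt_norm_sq x).hasFDerivAt
  have hn : HasFDerivAt (fun y : En n => ‖y‖) ((1 / ‖x‖) • innerSL ℝ x) x := by
    have := hs.sqrt (by positivity)
    simp only [Real.sqrt_sq (norm_nonneg _)] at this
    refine this.congr_fderiv (ContinuousLinearMap.ext fun y => ?_)
    simp
    field_simp
  have hc := hd.hasDerivAt.comp_hasFDerivAt x hn
  rw [hasGradientAt_iff_hasFDerivAt]
  refine hc.congr_fderiv (ContinuousLinearMap.ext fun y => ?_)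
  simp [inner_smul_left]
  ring

/-- **Lemma `L:rad`.** For `v(x) = h(|x|) u(x)` one has the pointwise
identity `(Zv/r)² μ - ⟨A∇v, ∇v⟩ = h(|x|)² [(Zu/r)² μ - ⟨A∇u, ∇u⟩]` on `Ω`; in
particular every radial function `v(x) = h(|x|)` satisfies `(Zv/r)² μ = ⟨A∇v, ∇v⟩`. -/
theorem radial_factor_identity
    (n : ℕ) (hn : 2 ≤ n)
    (A : En n → Matrix (Fin n) (Fin n) ℝ) (lam : ℝ)
    (hlam0 : 0 < lam) (hlam1 : lam < 1)
    (hAsymm : ∀ x ∈ OmegaExt n, (A x).IsSymm)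
    (hell : ∀ x ∈ OmegaExt n, ∀ ξ : En n,
      lam * ‖ξ‖ ^ 2 ≤ quadForm (A x) ξ ξ ∧ quadForm (A x) ξ ξ ≤ lam⁻¹ * ‖ξ‖ ^ 2)
    (h : ℝ → ℝ) (hh : ∀ t ∈ Set.Ioi (1 : ℝ), DifferentiableAt ℝ h t)
    (u : En n → ℝ) (hu : ∀ x ∈ OmegaExt n, DifferentiableAt ℝ u x) :
    (∀ x ∈ OmegaExt n,
      (Zd A (fun y => h ‖y‖ * u y) x / ‖x‖) ^ 2 * muA A x
          - quadForm (A x) (gradient (fun y => h ‖y‖ * u y) x)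
              (gradient (fun y => h ‖y‖ * u y) x)
        = (h ‖x‖) ^ 2 *
            ((Zd A u x / ‖x‖) ^ 2 * muA A x
              - quadForm (A x) (gradient u x) (gradient u x))) ∧
    (∀ x ∈ OmegaExt n,
      (Zd A (fun y => h ‖y‖) x / ‖x‖) ^ 2 * muA A x
        = quadForm (A x) (gradient (fun y => h ‖y‖) x) (gradient (fun y => h ‖y‖) x)) := by
  have nz : ∀ x ∈ OmegaExt n, ‖x‖ ≠ 0 := fun x hx => by
    have : 1 < ‖x‖ := hx
    positivity
  have hq : ∀ x ∈ OmegaExt n, quadForm (A x) x x ≠ 0 := fun x hx => by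
    have h1 := (hell x hx x).1
    have h2 := nz x hx
    have : 0 < lam * ‖x‖ ^ 2 := by positivity
    linarith
  have hr : ∀ x ∈ OmegaExt n,
      HasGradientAt (fun y : En n => h ‖y‖) ((deriv h ‖x‖ / ‖x‖) • x) x := fun x hx =>
    hasGradientAt_radial h x (norm_ne_zero_iff.mp (nz x hx)) (hh _ hx)
  refine ⟨fun x hx => ?_, fun x hx => ?_⟩
  · refine key_identity A x (nz x hx) (hAsymm x hx) (hq x hx) _ u _
      (u x * (deriv h ‖x‖ / ‖x‖)) ?_
    apply HasGradientAt.gradient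
    have h1 := (hr x hx).hasFDerivAt.mul (hu x hx).hasGradientAt.hasFDerivAt
    rw [hasGradientAt_iff_hasFDerivAt]
    refine h1.congr_fderiv (ContinuousLinearMap.ext fun y => ?_)
    simp [inner_add_left, inner_smul_left]
    ring
  · have := key_identity A x (nz x hx) (hAsymm x hx) (hq x hx) (fun y => h ‖y‖)
      (fun y => h ‖y‖) 0 (deriv h ‖x‖ / ‖x‖) (by rw [(hr x hx).gradient]; simp)
    linarith

end
end
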